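/- There exists a maximally-parallel Fréchet matching between R and B: a matching (f, g) with cost equal to d_F(R, B), together with a nonzero vector u ∈ ℝ² and parameters 0 ≤ t₀ ≤ t₁ ≤ 1, such that (i) on [0, t₀] either f is identically 0 or g is identically 0 (the first fan keeps one curve at the common start point), (ii) on [t₁, 1] either f is identically 1 or g is identically 1 (the last fan keeps one curve at the common end point), and (iii) for every t ∈ [t₀, t₁] the vector R(f(t)) − B(g(t)) is a scalar multiple of u (in the parallel part, every matched pair of points lies on a line parallel to u). -/

import Mathlib

open Set

noncomputable section

abbrev E2 := EuclideanSpace ℝ (Fin 2)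

/-- `R` is piecewise affine on `[0,1]` with finitely many breakpoints. -/
def IsPiecewiseAffine (R : ℝ → E2) : Prop :=
  ∃ (k : ℕ) (t : ℕ → ℝ), 0 < k ∧ t 0 = 0 ∧ t k = 1 ∧
    (∀ i < k, t i < t (i + 1)) ∧
    ∀ i < k, ∀ x ∈ Icc (t i) (t (i + 1)),
      R x = R (t i) + ((x - t i) / (t (i + 1) - t i)) • (R (t (i + 1)) - R (t i))

/-- A reparameterization: a nondecreasing surjection of `[0,1]` onto `[0,1]`. -/
def IsRepar (f : ℝ → ℝ) : Prop :=
  MonotoneOn f (Icc 0 1) ∧ MapsTo f (Icc 0 1) (Icc 0 1) ∧ SurjOn f (Icc 0 1) (Icc 0 1)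

/-- The (Euclidean) cost of a matching `(f, g)` between `R` and `B`. -/
def eCost (R B : ℝ → E2) (f g : ℝ → ℝ) : ℝ :=
  sSup {c : ℝ | ∃ t ∈ Icc (0:ℝ) 1, c = ‖R (f t) - B (g t)‖}

/-- The (Euclidean) Fréchet distance between `R` and `B`. -/
def eFrechet (R B : ℝ → E2) : ℝ :=
  sInf {c : ℝ | ∃ f g : ℝ → ℝ, IsRepar f ∧ IsRepar g ∧ c = eCost R B f g}

/-- planar cross product -/
def cr (u x : E2) : ℝ := u 0 * x 1 - u 1 * x 0

lemma cr_add (u x y : E2) : cr u (x + y) = cr u x + cr u y := by simp [cr]; ring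
lemma cr_sub (u x y : E2) : cr u (x - y) = cr u x - cr u y := by simp [cr]; ring
lemma cr_smul (u x : E2) (c : ℝ) : cr u (c • x) = c * cr u x := by simp [cr]; ring
lemma smul_cr (u x : E2) (c : ℝ) : cr (c • u) x = c * cr u x := by simp [cr]; ring
lemma cr_neg (u x : E2) : cr u (-x) = - cr u x := by simp [cr]; ring
lemma neg_cr (u x : E2) : cr (-u) x = - cr u x := by simp [cr]; ring
lemma cr_self (u : E2) : cr u u = 0 := by simp [cr]; ring
lemma cr_comm (u v : E2) : cr u v = - cr v u := by simp [cr]; ring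

lemma cr_continuous : Continuous (fun z : E2 × E2 => cr z.1 z.2) := by
  unfold cr; fun_prop

lemma cr_cont (u : E2) : Continuous (cr u) := by
  unfold cr; fun_prop

lemma e2_ne {u : E2} (hu : u ≠ 0) : 0 < u 0 ^ 2 + u 1 ^ 2 := by
  by_contra h
  apply hu
  have h0 : u 0 = 0 := by nlinarith [sq_nonneg (u 0), sq_nonneg (u 1)]
  have h1 : u 1 = 0 := by nlinarith [sq_nonneg (u 0), sq_nonneg (u 1)]
  ext i; fin_cases i <;> simp [h0, h1]

lemma cr_eq_zero {u x : E2} (hu : u ≠ 0) (h : cr u x = 0) : ∃ c : ℝ, x = c • u := by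
  have hp := e2_ne hu
  refine ⟨(u 0 * x 0 + u 1 * x 1) / (u 0 ^ 2 + u 1 ^ 2), ?_⟩
  unfold cr at h
  ext i; fin_cases i
  · simp; field_simp; linear_combination (-(u 1)) * h
  · simp; field_simp; linear_combination (u 0) * h

lemma cr_uniq {w u x y : E2} (h : cr w u ≠ 0) (h1 : cr w x = cr w y) (h2 : cr u x = cr u y) :
    x = y := by
  unfold cr at h h1 h2
  have e0 : (w 0 * u 1 - w 1 * u 0) * (x 0 - y 0) = 0 := by
    linear_combination (u 0) * h1 - (w 0) * h2
  have e1 : (w 0 * u 1 - w 1 * u 0) * (x 1 - y 1) = 0 := by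
    linear_combination (u 1) * h1 - (w 1) * h2
  have e0' := (mul_eq_zero.1 e0).resolve_left h
  have e1' := (mul_eq_zero.1 e1).resolve_left h
  ext i; fin_cases i
  · simp; linarith
  · simp; linarith

/-- vector rotated by a right angle -/
def perp (u : E2) : E2 := !₂[-u 1, u 0]

lemma cr_perp (u : E2) : cr u (perp u) = u 0 ^ 2 + u 1 ^ 2 := by simp [cr, perp]; ring

lemma norm_sq_e2 (u : E2) : ‖u‖ ^ 2 = u 0 ^ 2 + u 1 ^ 2 := by
  rw [EuclideanSpace.real_norm_sq_eq]; simp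

lemma norm_perp (u : E2) : ‖perp u‖ = ‖u‖ := by
  have : ‖perp u‖ ^ 2 = ‖u‖ ^ 2 := by rw [norm_sq_e2, norm_sq_e2]; simp [perp]; ring
  nlinarith [norm_nonneg (perp u), norm_nonneg u, sq_nonneg (‖perp u‖ - ‖u‖), sq_nonneg (‖perp u‖ + ‖u‖)]

lemma exists_cr (φ : E2 →L[ℝ] ℝ) : ∃ w : E2, ∀ x, φ x = cr w x := by
  refine ⟨!₂[φ (EuclideanSpace.single 1 1), -φ (EuclideanSpace.single 0 1)], fun x => ?_⟩
  have hx : x = x 0 • EuclideanSpace.single 0 (1:ℝ) + x 1 • EuclideanSpace.single 1 (1:ℝ) := by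
    ext i; fin_cases i <;> simp
  conv_lhs => rw [hx]
  rw [map_add, map_smul, map_smul]; simp [cr]; ring

/-- an interior point is not extremal -/
lemma exists_lt_of_interior {P : Set E2} {m u : E2} (hm : m ∈ interior P) (hu : u ≠ 0) :
    ∃ x ∈ interior P, cr u x < cr u m := by
  have hc : Continuous (fun k : ℝ => m - k • perp u) := by fun_prop
  have h0 : (fun k : ℝ => m - k • perp u) 0 ∈ interior P := by simpa using hm
  have hn := hc.continuousAt.preimage_mem_nhds (isOpen_interior.mem_nhds h0)
  obtain ⟨ε, hε, hb⟩ := Metric.mem_nhds_iff.1 hn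
  have h2 : ε / 2 ∈ Metric.ball (0:ℝ) ε := by
    simp [abs_of_pos hε]; exact hε
  refine ⟨_, hb h2, ?_⟩
  simp only [cr_sub, cr_smul, cr_perp]
  have := e2_ne hu
  nlinarith [mul_pos hε this]

lemma frontier_below {P : Set E2} {x u : E2} (hP : IsCompact P) (hx : x ∈ P) (hu : u ≠ 0) :
    ∃ z ∈ frontier P, cr u z ≤ cr u x := by
  obtain ⟨z, hz, hmin⟩ := hP.exists_isMinOn ⟨x, hx⟩ (cr_cont u).continuousOn
  refine ⟨z, ?_, hmin hx⟩
  rw [hP.isClosed.frontier_eq]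
  refine ⟨hz, fun hi => ?_⟩
  obtain ⟨y, hy, hlt⟩ := exists_lt_of_interior hi hu
  exact absurd (hmin (interior_subset hy)) (not_le.2 hlt)

lemma frontier_below_lt {P : Set E2} {x u : E2} (hP : IsCompact P) (hx : x ∈ interior P)
    (hu : u ≠ 0) : ∃ z ∈ frontier P, cr u z < cr u x := by
  obtain ⟨y, hy, hlt⟩ := exists_lt_of_interior hx hu
  obtain ⟨z, hz, hle⟩ := frontier_below hP (interior_subset hy) hu
  exact ⟨z, hz, hle.trans_lt hlt⟩

lemma ray {P : Set E2} {i D : E2} (hP : IsCompact P) (hi : i ∈ interior P) (hD : D ≠ 0) :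
    ∃ k : ℝ, 0 < k ∧ i + k • D ∈ frontier P := by
  have hc : Continuous (fun k : ℝ => i + k • D) := by fun_prop
  have hemb : Topology.IsClosedEmbedding (fun k : ℝ => i + k • D) :=
    (Homeomorph.addLeft i).isClosedEmbedding.comp (isClosedEmbedding_smul_left hD)
  have hK : IsCompact ((fun k : ℝ => i + k • D) ⁻¹' P) := hemb.isCompact_preimage hP
  have h0 : (0:ℝ) ∈ (fun k : ℝ => i + k • D) ⁻¹' P := by
    simpa using interior_subset hi
  obtain ⟨k, hk, hmax⟩ := hK.exists_isMaxOn ⟨0, h0⟩ continuous_id.continuousOn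
  have key : i + k • D ∉ interior P := by
    intro hin
    have hn := hc.continuousAt.preimage_mem_nhds (isOpen_interior.mem_nhds hin)
    obtain ⟨ε, hε, hb⟩ := Metric.mem_nhds_iff.1 hn
    have h2 : k + ε / 2 ∈ Metric.ball k ε := by
      simp [abs_of_pos hε]; exact hε
    have := hmax (interior_subset (hb h2) : i + (k + ε/2) • D ∈ P)
    simp at this
    linarith
  refine ⟨k, ?_, ?_⟩
  · have h00 : (0:ℝ) ≤ k := hmax h0
    rcases h00.eq_or_lt with h | h
    · exfalso; apply key; rw [← h]; simpa using hi
    · exact h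
  · rw [hP.isClosed.frontier_eq]; exact ⟨hk, key⟩

lemma same_side {P : Set E2} (hc : Convex ℝ P) (hcl : IsClosed P) {i u : E2}
    (hi : i ∈ interior P) {a b : ℝ} (ha : i + a • u ∈ frontier P) (hb : i + b • u ∈ frontier P)
    (hab : 0 < a * b) : a = b := by
  rw [hcl.frontier_eq] at ha hb
  have key : ∀ a b : ℝ, i + a • u ∉ interior P → i + b • u ∈ P → 0 < a * b → |a| < |b| → False := by
    intro a b ha hb hab hlt
    apply ha
    have hb0 : b ≠ 0 := by rintro rfl; simp at hab
    have hq : 0 < a / b := by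
      rw [← mul_div_mul_right a b hb0]; exact div_pos hab (mul_self_pos.2 hb0)
    have hq1 : a / b < 1 := by
      rw [← abs_of_pos hq, abs_div, div_lt_one (abs_pos.2 hb0)]; exact hlt
    apply hc.openSegment_interior_self_subset_interior hi hb
    refine ⟨1 - a / b, a / b, by linarith, hq, by ring, ?_⟩
    have : a = a / b * b := by field_simp
    conv_rhs => rw [this]
    module
  rcases lt_trichotomy |a| |b| with h | h | h
  · exact (key a b ha.2 hb.1 hab h).elim
  · rcases abs_eq_abs.1 h with h | h
    · exact h
    · subst h; nlinarith [sq_nonneg b]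
  · exact (key b a hb.2 ha.1 (by linarith [mul_comm a b]) h).elim

lemma three_gen {P : Set E2} (hc : Convex ℝ P) (hcl : IsClosed P) {i u x y z : E2}
    (hi : i ∈ interior P) (hu : u ≠ 0) (hx : x ∈ frontier P) (hy : y ∈ frontier P)
    (hz : z ∈ frontier P) (ex : cr u x = cr u i) (ey : cr u y = cr u i) (ez : cr u z = cr u i)
    (hxy : x ≠ y) (hyz : y ≠ z) (hxz : x ≠ z) : False := by
  obtain ⟨a, ha⟩ := cr_eq_zero hu (x := x - i) (by rw [cr_sub]; linarith)
  obtain ⟨b, hb⟩ := cr_eq_zero hu (x := y - i) (by rw [cr_sub]; linarith)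
  obtain ⟨c, hc'⟩ := cr_eq_zero hu (x := z - i) (by rw [cr_sub]; linarith)
  obtain rfl : x = i + a • u := by rw [← ha]; abel
  obtain rfl : y = i + b • u := by rw [← hb]; abel
  obtain rfl : z = i + c • u := by rw [← hc']; abel
  have nz : ∀ a : ℝ, i + a • u ∈ frontier P → a ≠ 0 := by
    rintro a h rfl
    rw [hcl.frontier_eq] at h
    exact h.2 (by simpa using hi)
  have ha0 := nz a hx
  have hb0 := nz b hy
  have hc0 := nz c hz
  have hab : ¬ 0 < a * b := fun h => hxy (by rw [same_side hc hcl hi hx hy h])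
  have hbc : ¬ 0 < b * c := fun h => hyz (by rw [same_side hc hcl hi hy hz h])
  have hac : ¬ 0 < a * c := fun h => hxz (by rw [same_side hc hcl hi hx hz h])
  rcases lt_or_gt_of_ne ha0 with h1 | h1 <;> rcases lt_or_gt_of_ne hb0 with h2 | h2 <;>
    rcases lt_or_gt_of_ne hc0 with h3 | h3 <;>
    first
    | exact hab (mul_pos h1 h2)
    | exact hab (mul_pos_of_neg_of_neg h1 h2)
    | exact hbc (mul_pos h2 h3)
    | exact hbc (mul_pos_of_neg_of_neg h2 h3)
    | exact hac (mul_pos h1 h3)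
    | exact hac (mul_pos_of_neg_of_neg h1 h3)

lemma level_interior {P : Set E2} (hc : Convex ℝ P) (hne : (interior P).Nonempty) {u a b : E2}
    {d : ℝ} (ha : a ∈ P) (hb : b ∈ P) (h1 : cr u a < d) (h2 : d < cr u b) :
    ∃ i ∈ interior P, cr u i = d := by
  have hcl : P ⊆ closure (interior P) := by
    rw [hc.closure_interior_eq_closure_of_nonempty_interior hne]; exact subset_closure
  obtain ⟨a', ha', ha''⟩ := mem_closure_iff.1 (hcl ha) {x | cr u x < d}
    (isOpen_lt (cr_cont u) continuous_const) h1
  obtain ⟨b', hb', hb''⟩ := mem_closure_iff.1 (hcl hb) {x | d < cr u x}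
    (isOpen_lt continuous_const (cr_cont u)) h2
  simp only [mem_ofPred_eq] at ha' hb'
  have hpos : 0 < cr u b' - cr u a' := by linarith
  refine ⟨((cr u b' - d) / (cr u b' - cr u a')) • a' + ((d - cr u a') / (cr u b' - cr u a')) • b',
    hc.interior ha'' hb'' (div_nonneg (by linarith) hpos.le) (div_nonneg (by linarith) hpos.le)
      (by field_simp; ring), ?_⟩
  rw [cr_add, cr_smul, cr_smul]; field_simp; ring

lemma ivt_up {γ : ℝ → E2} (hγ : ContinuousOn γ (Icc 0 1)) (u : E2) {a b d : ℝ} (ha : 0 ≤ a)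
    (hab : a ≤ b) (hb : b ≤ 1) (h1 : cr u (γ a) ≤ d) (h2 : d ≤ cr u (γ b)) :
    ∃ s ∈ Icc a b, cr u (γ s) = d := by
  have : ContinuousOn (fun s => cr u (γ s)) (Icc a b) :=
    (cr_cont u).comp_continuousOn (hγ.mono (Icc_subset_Icc ha hb))
  obtain ⟨s, hs, h⟩ := intermediate_value_Icc hab this ⟨h1, h2⟩
  exact ⟨s, hs, h⟩

lemma ivt_down {γ : ℝ → E2} (hγ : ContinuousOn γ (Icc 0 1)) (u : E2) {a b d : ℝ} (ha : 0 ≤ a)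
    (hab : a ≤ b) (hb : b ≤ 1) (h1 : d ≤ cr u (γ a)) (h2 : cr u (γ b) ≤ d) :
    ∃ s ∈ Icc a b, cr u (γ s) = d := by
  obtain ⟨s, hs, h⟩ := ivt_up hγ (-u) (d := -d) ha hab hb (by rw [neg_cr]; linarith)
    (by rw [neg_cr]; linarith)
  exact ⟨s, hs, by rw [neg_cr] at h; linarith⟩

/-- Two arcs bounding a compact convex region -/
structure Cfg (P : Set E2) (R B : ℝ → E2) : Prop where
  cpt : IsCompact P
  cvx : Convex ℝ P
  ne : (interior P).Nonempty
  Rc : ContinuousOn R (Icc 0 1)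
  Bc : ContinuousOn B (Icc 0 1)
  Ri : InjOn R (Icc 0 1)
  Bi : InjOn B (Icc 0 1)
  h0 : R 0 = B 0
  h1 : R 1 = B 1
  bd : R '' Icc (0:ℝ) 1 ∪ B '' Icc (0:ℝ) 1 = frontier P
  int : R '' Icc (0:ℝ) 1 ∩ B '' Icc (0:ℝ) 1 = {R 0, R 1}

namespace Cfg
variable {P : Set E2} {R B : ℝ → E2}

lemma swap (c : Cfg P R B) : Cfg P B R where
  cpt := c.cpt
  cvx := c.cvx
  ne := c.ne
  Rc := c.Bc
  Bc := c.Rc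
  Ri := c.Bi
  Bi := c.Ri
  h0 := c.h0.symm
  h1 := c.h1.symm
  bd := by rw [union_comm]; exact c.bd
  int := by rw [inter_comm, ← c.h0, ← c.h1]; exact c.int

lemma _root_.img_rev (R : ℝ → E2) : (fun s => R (1 - s)) '' Icc (0:ℝ) 1 = R '' Icc (0:ℝ) 1 := by
  ext x; constructor
  · rintro ⟨s, hs, rfl⟩; exact ⟨1 - s, ⟨by linarith [hs.2], by linarith [hs.1]⟩, rfl⟩
  · rintro ⟨s, hs, rfl⟩
    exact ⟨1 - s, ⟨by linarith [hs.2], by linarith [hs.1]⟩, by simp⟩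

lemma _root_.cont_rev {R : ℝ → E2} (h : ContinuousOn R (Icc 0 1)) :
    ContinuousOn (fun s => R (1 - s)) (Icc 0 1) :=
  h.comp (by fun_prop) (fun s hs => ⟨by linarith [hs.2], by linarith [hs.1]⟩)

lemma _root_.inj_rev {R : ℝ → E2} (h : InjOn R (Icc 0 1)) :
    InjOn (fun s => R (1 - s)) (Icc 0 1) := by
  intro a ha b hb hab
  have := h ⟨by linarith [ha.2], by linarith [ha.1]⟩ ⟨by linarith [hb.2], by linarith [hb.1]⟩ hab
  linarith

lemma rev (c : Cfg P R B) : Cfg P (fun s => R (1 - s)) (fun s => B (1 - s)) where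
  cpt := c.cpt
  cvx := c.cvx
  ne := c.ne
  Rc := cont_rev c.Rc
  Bc := cont_rev c.Bc
  Ri := inj_rev c.Ri
  Bi := inj_rev c.Bi
  h0 := by simpa using c.h1
  h1 := by simpa using c.h0
  bd := by rw [img_rev, img_rev]; exact c.bd
  int := by rw [img_rev, img_rev, c.int]; simp [pair_comm]

lemma Rf (c : Cfg P R B) {s : ℝ} (hs : s ∈ Icc (0:ℝ) 1) : R s ∈ frontier P := by
  rw [← c.bd]; exact Or.inl ⟨s, hs, rfl⟩
lemma Bf (c : Cfg P R B) {s : ℝ} (hs : s ∈ Icc (0:ℝ) 1) : B s ∈ frontier P := c.swap.Rf hs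
lemma RP (c : Cfg P R B) {s : ℝ} (hs : s ∈ Icc (0:ℝ) 1) : R s ∈ P :=
  c.cpt.isClosed.frontier_subset (c.Rf hs)
lemma BP (c : Cfg P R B) {s : ℝ} (hs : s ∈ Icc (0:ℝ) 1) : B s ∈ P :=
  c.cpt.isClosed.frontier_subset (c.Bf hs)

lemma RB (c : Cfg P R B) {s t : ℝ} (hs : s ∈ Icc (0:ℝ) 1) (ht : t ∈ Icc (0:ℝ) 1)
    (h : R s = B t) : (s = 0 ∧ t = 0) ∨ (s = 1 ∧ t = 1) := by
  have hm : R s ∈ R '' Icc (0:ℝ) 1 ∩ B '' Icc (0:ℝ) 1 := ⟨⟨s, hs, rfl⟩, ⟨t, ht, h.symm⟩⟩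
  rw [c.int] at hm
  have z : (0:ℝ) ∈ Icc (0:ℝ) 1 := by simp
  have o : (1:ℝ) ∈ Icc (0:ℝ) 1 := by simp
  rcases hm with hm | hm
  · exact Or.inl ⟨c.Ri hs z hm, c.Bi ht z (by rw [← h, hm, c.h0])⟩
  · exact Or.inr ⟨c.Ri hs o hm, c.Bi ht o (by rw [← h, hm, c.h1])⟩

end Cfg

namespace Cfg
variable {P : Set E2} {R B : ℝ → E2}

lemma three (c : Cfg P R B) (sc : StrictConvex ℝ P) {u x y z : E2}
    (hu : u ≠ 0) (hx : x ∈ frontier P) (hy : y ∈ frontier P)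
    (hz : z ∈ frontier P) (exy : cr u x = cr u y) (eyz : cr u y = cr u z)
    (hxy : x ≠ y) (hyz : y ≠ z) (hxz : x ≠ z) : False := by
  have hcl := c.cpt.isClosed
  have hm : (1/2 : ℝ) • x + (1/2 : ℝ) • y ∈ interior P :=
    sc (hcl.frontier_subset hx) (hcl.frontier_subset hy) hxy (by norm_num) (by norm_num)
      (by norm_num)
  have e : cr u ((1/2 : ℝ) • x + (1/2 : ℝ) • y) = cr u y := by
    rw [cr_add, cr_smul, cr_smul, exy]; ring
  exact three_gen c.cvx hcl hm hu hx hy hz (by rw [e, exy]) e.symm (by rw [e, eyz]) hxy hyz hxz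

lemma pq (c : Cfg P R B) : R 0 ≠ R 1 := fun h => by
  have := c.Ri (by simp) (by simp) h
  norm_num at this

/-- constant orientation sign along `R` -/
lemma signR (c : Cfg P R B) (sc : StrictConvex ℝ P) :
    ∃ σ : ℝ, (σ = 1 ∨ σ = -1) ∧ ∀ s t s' : ℝ, 0 ≤ s → s < s' → s' ≤ 1 → 0 ≤ t → t ≤ 1 →
      0 < s + t → s' + t < 2 → 0 < σ * cr (R s - B t) (R s' - B t) := by
  let Ω : Set (ℝ × ℝ × ℝ) := {z | 0 ≤ z.1 ∧ z.1 < z.2.2 ∧ z.2.2 ≤ 1 ∧ 0 ≤ z.2.1 ∧ z.2.1 ≤ 1 ∧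
      0 < z.1 + z.2.1 ∧ z.2.2 + z.2.1 < 2}
  let h : ℝ × ℝ × ℝ → ℝ := fun z => cr (R z.1 - B z.2.1) (R z.2.2 - B z.2.1)
  have hconv : Convex ℝ Ω := by
    rintro ⟨a1, a2, a3⟩ ⟨p1, p2, p3, p4, p5, p6, p7⟩ ⟨b1, b2, b3⟩ ⟨q1, q2, q3, q4, q5, q6, q7⟩ k l hk hl hkl
    simp only at p1 p2 p3 p4 p5 p6 p7 q1 q2 q3 q4 q5 q6 q7
    obtain rfl : l = 1 - k := by linarith
    have hk1 : k ≤ 1 := by linarith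
    refine ⟨?_, ?_, ?_, ?_, ?_, ?_, ?_⟩ <;>
      simp only [Prod.smul_mk, Prod.mk_add_mk, smul_eq_mul]
    · positivity
    · rcases hk.eq_or_lt with rfl | hk'
      · linarith
      · nlinarith
    · nlinarith
    · positivity
    · nlinarith
    · rcases hk.eq_or_lt with rfl | hk'
      · linarith
      · nlinarith
    · rcases hk.eq_or_lt with rfl | hk'
      · linarith
      · nlinarith
  have hcont : ContinuousOn h Ω := by
    have r1 : ContinuousOn (fun z : ℝ × ℝ × ℝ => R z.1) Ω :=
      c.Rc.comp (by fun_prop) (fun z ⟨p1, p2, p3, p4, p5, p6, p7⟩ => ⟨p1, by linarith⟩)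
    have r2 : ContinuousOn (fun z : ℝ × ℝ × ℝ => R z.2.2) Ω :=
      c.Rc.comp (by fun_prop) (fun z ⟨p1, p2, p3, p4, p5, p6, p7⟩ => ⟨by linarith, by linarith⟩)
    have r3 : ContinuousOn (fun z : ℝ × ℝ × ℝ => B z.2.1) Ω :=
      c.Bc.comp (by fun_prop) (fun z ⟨p1, p2, p3, p4, p5, p6, p7⟩ => ⟨by linarith, by linarith⟩)
    exact cr_continuous.comp_continuousOn ((r1.sub r3).prodMk (r2.sub r3))
  have hne : ∀ z ∈ Ω, h z ≠ 0 := by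
    rintro ⟨s, t, s'⟩ ⟨p1, p2, p3, p4, p5, p6, p7⟩ hz
    simp only at p1 p2 p3 p4 p5 p6 p7
    have hs : s ∈ Icc (0:ℝ) 1 := ⟨p1, by linarith⟩
    have hs' : s' ∈ Icc (0:ℝ) 1 := ⟨by linarith, p3⟩
    have ht : t ∈ Icc (0:ℝ) 1 := ⟨p4, p5⟩
    have n1 : R s ≠ B t := fun e => by rcases c.RB hs ht e with ⟨h1, h2⟩ | ⟨h1, h2⟩ <;> linarith
    have n2 : R s' ≠ B t := fun e => by rcases c.RB hs' ht e with ⟨h1, h2⟩ | ⟨h1, h2⟩ <;> linarith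
    have n3 : R s ≠ R s' := fun e => by have := c.Ri hs hs' e; linarith
    have e1 := cr_self (R s - B t)
    have e2 : cr (R s - B t) (R s' - B t) = 0 := hz
    rw [cr_sub (R s - B t) (R s)] at e1
    rw [cr_sub (R s - B t) (R s')] at e2
    exact c.three sc (sub_ne_zero.2 n1) (c.Rf hs) (c.Bf ht) (c.Rf hs') (by linarith)
      (by linarith) n1 n2.symm n3
  by_cases hp : 0 < h (1/2, 1/2, 1)
  · refine ⟨1, Or.inl rfl, fun s t s' p1 p2 p3 p4 p5 p6 p7 => ?_⟩
    rw [one_mul]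
    by_contra hneg
    obtain ⟨z, hz, hz0⟩ := hconv.isPreconnected.intermediate_value
      (a := (s, t, s')) (b := (1/2, 1/2, 1)) ⟨p1, p2, p3, p4, p5, p6, p7⟩
      (by refine ⟨?_, ?_, ?_, ?_, ?_, ?_, ?_⟩ <;> norm_num) hcont (⟨not_lt.1 hneg, hp.le⟩ : (0:ℝ) ∈ Icc _ _)
    exact hne z hz hz0
  · refine ⟨-1, Or.inr rfl, fun s t s' p1 p2 p3 p4 p5 p6 p7 => ?_⟩
    by_contra hneg
    obtain ⟨z, hz, hz0⟩ := hconv.isPreconnected.intermediate_value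
      (b := (s, t, s')) (a := (1/2, 1/2, 1)) 
      (by refine ⟨?_, ?_, ?_, ?_, ?_, ?_, ?_⟩ <;> norm_num) ⟨p1, p2, p3, p4, p5, p6, p7⟩
      hcont (⟨not_lt.1 hp, by show 0 ≤ cr (R s - B t) (R s' - B t); linarith⟩ : (0:ℝ) ∈ Icc _ _)
    exact hne z hz hz0

lemma orient (c : Cfg P R B) (sc : StrictConvex ℝ P) :
    ∃ σ : ℝ, (σ = 1 ∨ σ = -1) ∧ ∀ s t : ℝ, 0 ≤ s → s ≤ 1 → 0 ≤ t → t ≤ 1 →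
      0 < s + t → s + t < 2 →
      (∀ s', s < s' → s' ≤ 1 → s' + t < 2 → 0 < σ * cr (R s - B t) (R s' - B t)) ∧
      (∀ t', t < t' → t' ≤ 1 → s + t' < 2 → 0 < σ * cr (R s - B t) (B t' - B t)) ∧
      (∀ s', s' < s → 0 ≤ s' → 0 < s' + t → σ * cr (R s - B t) (R s' - B t) < 0) ∧
      (∀ t', t' < t → 0 ≤ t' → 0 < s + t' → σ * cr (R s - B t) (B t' - B t) < 0) := by
  obtain ⟨σ₁, h1, k1⟩ := c.signR sc
  obtain ⟨σ₂, h2, k2⟩ := c.swap.signR sc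
  obtain ⟨σ₃, h3, k3⟩ := c.rev.signR sc
  obtain ⟨σ₄, h4, k4⟩ := c.rev.swap.signR sc
  have flip : ∀ s t x, cr (B t - R s) (x - R s) = - cr (R s - B t) (x - B t) := by
    intro s t x; simp [cr]; ring
  have e12 : σ₂ = - σ₁ := by
    have a := k1 (1/2) (1/2) 1 (by norm_num) (by norm_num) (by norm_num) (by norm_num)
      (by norm_num) (by norm_num) (by norm_num)
    have b := k2 (1/2) (1/2) 1 (by norm_num) (by norm_num) (by norm_num) (by norm_num)
      (by norm_num) (by norm_num) (by norm_num)
    rw [flip, ← c.h1] at b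
    rcases h1 with rfl | rfl <;> rcases h2 with rfl | rfl <;> first | linarith | norm_num
  have e34 : σ₄ = - σ₃ := by
    have a := k3 (1/2) (1/2) 1 (by norm_num) (by norm_num) (by norm_num) (by norm_num)
      (by norm_num) (by norm_num) (by norm_num)
    have b := k4 (1/2) (1/2) 1 (by norm_num) (by norm_num) (by norm_num) (by norm_num)
      (by norm_num) (by norm_num) (by norm_num)
    simp only [flip] at b
    norm_num at a b
    rw [← c.h0] at b
    rcases h3 with rfl | rfl <;> rcases h4 with rfl | rfl <;> first | linarith | norm_num
  have K3 : ∀ s t s' : ℝ, s ≤ 1 → s' < s → 0 ≤ s' → 0 ≤ t → t ≤ 1 →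
      s + t < 2 → 0 < s' + t → 0 < σ₃ * cr (R s - B t) (R s' - B t) := by
    intro s t s' p1 p2 p3 p4 p5 p6 p7
    have := k3 (1 - s) (1 - t) (1 - s') (by linarith) (by linarith) (by linarith) (by linarith)
      (by linarith) (by linarith) (by linarith)
    simpa using this
  have K4 : ∀ s t t' : ℝ, t ≤ 1 → t' < t → 0 ≤ t' → 0 ≤ s → s ≤ 1 →
      s + t < 2 → 0 < s + t' → 0 < σ₃ * cr (R s - B t) (B t' - B t) := by
    intro s t s' p1 p2 p3 p4 p5 p6 p7
    have := k4 (1 - t) (1 - s) (1 - s') (by linarith) (by linarith) (by linarith) (by linarith)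
      (by linarith) (by linarith) (by linarith)
    simp only [sub_sub_cancel] at this
    rw [flip, e34] at this
    linarith
  have K2 : ∀ s t t' : ℝ, 0 ≤ t → t < t' → t' ≤ 1 → 0 ≤ s → s ≤ 1 → 
      0 < s + t → s + t' < 2 → 0 < σ₁ * cr (R s - B t) (B t' - B t) := by
    intro s t t' p1 p2 p3 p4 p5 p6 p7
    have := k2 t s t' p1 p2 p3 p4 p5 (by linarith) (by linarith)
    rw [flip, e12] at this
    linarith
  have e13 : σ₃ = - σ₁ := by
    by_contra hcon
    have e : σ₃ = σ₁ := by
      rcases h1 with rfl | rfl <;> rcases h3 with rfl | rfl <;> first | rfl | (norm_num at hcon)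
    subst e
    have I : (1/2:ℝ) ∈ Icc (0:ℝ) 1 := by constructor <;> norm_num
    have n1 : R (1/2) ≠ B (1/2) := fun e => by
      rcases c.RB I I e with ⟨h1, h2⟩ | ⟨h1, h2⟩ <;> norm_num at h1
    have hm : (1/2 : ℝ) • R (1/2) + (1/2 : ℝ) • B (1/2) ∈ interior P :=
      sc (c.RP I) (c.BP I) n1 (by norm_num) (by norm_num) (by norm_num)
    have hu : σ₃ • (R (1/2) - B (1/2)) ≠ 0 := by
      apply smul_ne_zero
      · rcases h1 with rfl | rfl <;> norm_num
      · exact sub_ne_zero.2 n1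
    obtain ⟨z, hz, hlt⟩ := frontier_below_lt c.cpt hm hu
    have e0 : cr (R (1/2) - B (1/2)) (R (1/2)) = cr (R (1/2) - B (1/2)) (B (1/2)) := by
      have := cr_self (R (1/2) - B (1/2))
      rw [cr_sub (R (1/2) - B (1/2)) (R (1/2))] at this
      linarith
    have hlt' : σ₃ * cr (R (1/2) - B (1/2)) (z - B (1/2)) < 0 := by
      rw [smul_cr, smul_cr, cr_add, cr_smul, cr_smul, e0] at hlt
      rw [cr_sub]
      linarith
    rw [← c.bd] at hz
    rcases hz with ⟨s', hs', rfl⟩ | ⟨s', hs', rfl⟩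
    · rcases lt_trichotomy s' (1/2) with hh | hh | hh
      · have := K3 (1/2) (1/2) s' (by norm_num) hh hs'.1 (by norm_num) (by norm_num) (by norm_num)
          (by linarith [hs'.1])
        linarith
      · subst hh
        rw [cr_sub, e0] at hlt'; simp at hlt'
      · have := k1 (1/2) (1/2) s' (by norm_num) hh hs'.2 (by norm_num) (by norm_num) (by norm_num)
          (by linarith [hs'.2])
        linarith
    · rcases lt_trichotomy s' (1/2) with hh | hh | hh
      · have := K4 (1/2) (1/2) s' (by norm_num) hh hs'.1 (by norm_num) (by norm_num) (by norm_num)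
          (by linarith [hs'.1])
        linarith
      · subst hh
        rw [cr_sub] at hlt'; simp at hlt'
      · have := K2 (1/2) (1/2) s' (by norm_num) hh hs'.2 (by norm_num) (by norm_num) (by norm_num)
          (by linarith [hs'.2])
        linarith
  refine ⟨σ₁, h1, fun s t p1 p2 p3 p4 p5 p6 => ⟨?_, ?_, ?_, ?_⟩⟩
  · intro s' q1 q2 q3; exact k1 s t s' p1 q1 q2 p3 p4 p5 q3
  · intro t' q1 q2 q3; exact K2 s t t' p3 q1 q2 p1 p2 p5 q3
  · intro s' q1 q2 q3; have := K3 s t s' p2 q1 q2 p3 p4 p6 q3; rw [e13] at this; linarith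
  · intro s' q1 q2 q3; have := K4 s t s' p4 q1 q2 p1 p2 p6 q3; rw [e13] at this; linarith

end Cfg

namespace Cfg
variable {P : Set E2} {R B : ℝ → E2}

/-- a continuous pair of reparameterizations defined on the whole line -/
structure Par (f : ℝ → ℝ) : Prop where
  c : Continuous f
  m : Monotone f
  z : f 0 = 0
  o : f 1 = 1
  I : ∀ t, f t ∈ Icc (0:ℝ) 1

lemma Par.rev {f : ℝ → ℝ} (h : Par f) : Par (fun t => 1 - f (1 - t)) where
  c := by have := h.c; fun_prop
  m := fun a b hab => by
    have := h.m (by linarith : 1 - b ≤ 1 - a)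
    simp only; linarith
  z := by simp [h.o]
  o := by simp [h.z]
  I := fun t => ⟨by linarith [(h.I (1 - t)).2], by linarith [(h.I (1 - t)).1]⟩

lemma near_start (c : Cfg P R B) {i : E2} {ρ : ℝ} (hρ : 0 < ρ)
    (hb : Metric.ball i ρ ⊆ interior P) {f g : ℝ → ℝ} (hf : Par f) (hg : Par g) {σ : ℝ}
    (hσ : ∀ s t : ℝ, 0 ≤ s → s ≤ 1 → 0 ≤ t → t ≤ 1 →
      0 < s + t → s + t < 2 →
      (∀ s', s < s' → s' ≤ 1 → s' + t < 2 → 0 < σ * cr (R s - B t) (R s' - B t)) ∧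
      (∀ t', t < t' → t' ≤ 1 → s + t' < 2 → 0 < σ * cr (R s - B t) (B t' - B t))) :
    ∃ τ ∈ Icc (0:ℝ) 1, 0 < f τ + g τ ∧ f τ + g τ < 2 ∧ ∃ l : ℝ, 1 < l ∧
      i + l • (R (f τ) - B (g τ)) ∈ interior P ∧
      0 < σ * cr (R (f τ) - B (g τ)) (i - B (g τ)) := by
  have hi : i ∈ interior P := hb (Metric.mem_ball_self hρ)
  have z : (0:ℝ) ∈ Icc (0:ℝ) 1 := by simp
  have cs : ∀ γ : ℝ → E2, ContinuousOn γ (Icc 0 1) → ∃ η : ℝ, 0 < η ∧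
      ∀ s ∈ Icc (0:ℝ) 1, s < η → dist (γ s) (γ 0) < ρ / 2 := by
    intro γ hγ
    obtain ⟨η, hη, h⟩ := Metric.continuousOn_iff.1 hγ 0 z (ρ/2) (by linarith)
    exact ⟨η, hη, fun s hs hlt => h s hs (by rw [Real.dist_eq, sub_zero, abs_of_nonneg hs.1]; exact hlt)⟩
  obtain ⟨η₁, h1, k1⟩ := cs R c.Rc
  obtain ⟨η₂, h2, k2⟩ := cs B c.Bc
  rw [← c.h0] at k2
  let η := min 1 (min η₁ η₂) / 2
  have hη : 0 < η := by simp only [η]; positivity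
  have hη1 : η < 1 := by
    have : min 1 (min η₁ η₂) ≤ 1 := min_le_left _ _
    simp only [η]; linarith
  have hη2 : η < η₁ := by
    have : min 1 (min η₁ η₂) ≤ η₁ := (min_le_right _ _).trans (min_le_left _ _)
    simp only [η] at hη ⊢; linarith
  have hη3 : η < η₂ := by
    have : min 1 (min η₁ η₂) ≤ η₂ := (min_le_right _ _).trans (min_le_right _ _)
    simp only [η] at hη ⊢; linarith
  obtain ⟨τ, hτ, e⟩ := intermediate_value_Icc (zero_le_one (α := ℝ))
    (f := fun x => f x + g x) ((hf.c.add hg.c).continuousOn (s := Icc 0 1))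
    (show η ∈ Icc _ _ by simp only [hf.z, hg.z, hf.o, hg.o]; constructor <;> linarith)
  simp only at e
  have fI := hf.I τ
  have gI := hg.I τ
  set s := f τ
  set t := g τ
  have d1 := k1 s fI (by linarith [gI.1])
  have d2 := k2 t gI (by linarith [fI.1])
  have hrb : R s ≠ B t := fun e' => by
    rcases c.RB fI gI e' with ⟨h1, h2⟩ | ⟨h1, h2⟩ <;> linarith
  have hD : R s - B t ≠ 0 := sub_ne_zero.2 hrb
  have hnp : 0 < ‖R s - B t‖ := norm_pos_iff.2 hD
  have hn : ‖R s - B t‖ < ρ := by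
    rw [← dist_eq_norm]
    have := dist_triangle_right (R s) (B t) (R 0)
    linarith
  have hpos : 0 < σ * cr (R s - B t) (i - B t) := by
    by_contra hneg
    obtain ⟨k, hk, hkf⟩ := ray c.cpt hi hD
    obtain ⟨k', hk', hkf'⟩ := ray c.cpt hi (neg_ne_zero.2 hD)
    have far : ∀ z ∈ frontier P, ρ ≤ dist z i := by
      intro z hz
      by_contra hlt
      rw [c.cpt.isClosed.frontier_eq] at hz
      exact hz.2 (hb (Metric.mem_ball.2 (not_le.1 hlt)))
    have close : ∀ z ∈ frontier P, cr (R s - B t) z = cr (R s - B t) i → dist z (R 0) < ρ / 2 := by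
      intro z hz ez
      have hz' : ¬ 0 < σ * cr (R s - B t) (z - B t) := by
        rw [cr_sub, ez, ← cr_sub]; exact hneg
      have hs := hσ s t fI.1 fI.2 gI.1 gI.2 (by linarith) (by linarith)
      rw [← c.bd] at hz
      rcases hz with ⟨s', hs', rfl⟩ | ⟨s', hs', rfl⟩
      · have : s' ≤ s := by
          by_contra hlt
          exact hz' (hs.1 s' (not_le.1 hlt) hs'.2 (by linarith [hs'.2, fI.1]))
        exact k1 s' hs' (by linarith [gI.1])
      · have : s' ≤ t := by
          by_contra hlt
          exact hz' (hs.2 s' (not_le.1 hlt) hs'.2 (by linarith [hs'.2, gI.1]))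
        exact k2 s' hs' (by linarith [fI.1])
    have c1 := close _ hkf (by rw [cr_add, cr_smul, cr_self]; ring)
    have c2 := close _ hkf' (by rw [cr_add, cr_smul, cr_neg, cr_self]; ring)
    have f1 := far _ hkf
    have f2 := far _ hkf'
    have tri := dist_triangle_right (i + k • (R s - B t)) (i + k' • -(R s - B t)) (R 0)
    have e1 : dist (i + k • (R s - B t)) i = k * ‖R s - B t‖ := by
      rw [dist_eq_norm, add_sub_cancel_left, norm_smul, Real.norm_of_nonneg hk.le]
    have e2 : dist (i + k' • -(R s - B t)) i = k' * ‖R s - B t‖ := by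
      rw [dist_eq_norm, add_sub_cancel_left, norm_smul, norm_neg, Real.norm_of_nonneg hk'.le]
    have e3 : dist (i + k • (R s - B t)) (i + k' • -(R s - B t)) = (k + k') * ‖R s - B t‖ := by
      rw [dist_eq_norm, show i + k • (R s - B t) - (i + k' • -(R s - B t)) = (k + k') • (R s - B t) by
        module, norm_smul, Real.norm_of_nonneg (by linarith)]
    nlinarith
  refine ⟨τ, hτ, by linarith, by linarith, (1 + ρ / ‖R s - B t‖) / 2, ?_, ?_, hpos⟩
  · have : 1 < ρ / ‖R s - B t‖ := by rwa [lt_div_iff₀ hnp, one_mul]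
    linarith
  · apply hb
    rw [Metric.mem_ball, dist_eq_norm, add_sub_cancel_left, norm_smul, Real.norm_of_nonneg (by positivity)]
    have e : (1 + ρ / ‖R s - B t‖) / 2 * ‖R s - B t‖ = (‖R s - B t‖ + ρ) / 2 := by
      field_simp
    change (1 + ρ / ‖R s - B t‖) / 2 * ‖R s - B t‖ < ρ
    linarith

lemma antip (c : Cfg P R B) (sc : StrictConvex ℝ P) {f g : ℝ → ℝ} (hf : Par f) (hg : Par g) {σ : ℝ}
    (hσ : ∀ s t : ℝ, 0 ≤ s → s ≤ 1 → 0 ≤ t → t ≤ 1 →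
      0 < s + t → s + t < 2 →
      (∀ s', s < s' → s' ≤ 1 → s' + t < 2 → 0 < σ * cr (R s - B t) (R s' - B t)) ∧
      (∀ t', t < t' → t' ≤ 1 → s + t' < 2 → 0 < σ * cr (R s - B t) (B t' - B t)) ∧
      (∀ s', s' < s → 0 ≤ s' → 0 < s' + t → σ * cr (R s - B t) (R s' - B t) < 0) ∧
      (∀ t', t' < t → 0 ≤ t' → 0 < s + t' → σ * cr (R s - B t) (B t' - B t) < 0)) :
    ∃ τ ∈ Icc (0:ℝ) 1, 0 < f τ + g τ ∧ f τ + g τ < 2 ∧ 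
      ∀ y ∈ interior P, ∀ l : ℝ, 1 < l → y + l • (R (f τ) - B (g τ)) ∉ interior P := by
  obtain ⟨i, hi⟩ := c.ne
  obtain ⟨ρ, hρ, hb⟩ := Metric.isOpen_iff.1 isOpen_interior i hi
  have cr' : Continuous (fun τ => R (f τ)) := 
    c.Rc.comp_continuous hf.c hf.I
  have cb' : Continuous (fun τ => B (g τ)) := 
    c.Bc.comp_continuous hg.c hg.I
  have hopen : ∀ ε : ℝ, IsOpen {τ | ∃ y ∈ interior P, ∃ l : ℝ, 1 < l ∧
      y + l • (R (f τ) - B (g τ)) ∈ interior P ∧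
      0 < ε * cr (R (f τ) - B (g τ)) (y - B (g τ))} := by
    intro ε
    have : {τ | ∃ y ∈ interior P, ∃ l : ℝ, 1 < l ∧
      y + l • (R (f τ) - B (g τ)) ∈ interior P ∧
      0 < ε * cr (R (f τ) - B (g τ)) (y - B (g τ))} = ⋃ y ∈ interior P, ⋃ l ∈ Ioi (1:ℝ),
        {τ | y + l • (R (f τ) - B (g τ)) ∈ interior P ∧
          0 < ε * cr (R (f τ) - B (g τ)) (y - B (g τ))} := by
      ext τ; simp only [mem_ofPred_eq, mem_iUnion, exists_prop, mem_Ioi]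
    rw [this]
    refine isOpen_biUnion fun y hy => isOpen_biUnion fun l hl => IsOpen.and ?_ ?_
    · exact isOpen_interior.preimage (continuous_const.add ((cr'.sub cb').const_smul l))
    · exact isOpen_lt continuous_const
        (continuous_const.mul (cr_continuous.comp ((cr'.sub cb').prodMk (continuous_const.sub cb'))))
  have hJ : IsPreconnected {τ | τ ∈ Icc (0:ℝ) 1 ∧ 0 < f τ + g τ ∧ f τ + g τ < 2} := by
    apply OrdConnected.isPreconnected
    constructor
    rintro a ⟨ha, ha1, ha2⟩ b ⟨hb, hb1, hb2⟩ x ⟨hx, hx'⟩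
    refine ⟨⟨ha.1.trans hx, hx'.trans hb.2⟩, ?_, ?_⟩
    · linarith [hf.m hx, hg.m hx]
    · linarith [hf.m hx', hg.m hx']
  have hsub : ∀ τ ∈ {τ | τ ∈ Icc (0:ℝ) 1 ∧ 0 < f τ + g τ ∧ f τ + g τ < 2}, R (f τ) ≠ B (g τ) := by
    rintro τ ⟨h0, h1, h2⟩ e
    rcases c.RB (hf.I τ) (hg.I τ) e with ⟨h3, h4⟩ | ⟨h3, h4⟩ <;> linarith
  by_contra hcon
  push Not at hcon
  have hcover : {τ | τ ∈ Icc (0:ℝ) 1 ∧ 0 < f τ + g τ ∧ f τ + g τ < 2} ⊆ {τ | ∃ y ∈ interior P, ∃ l : ℝ, 1 < l ∧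
      y + l • (R (f τ) - B (g τ)) ∈ interior P ∧
      0 < σ * cr (R (f τ) - B (g τ)) (y - B (g τ))} ∪
      {τ | ∃ y ∈ interior P, ∃ l : ℝ, 1 < l ∧
      y + l • (R (f τ) - B (g τ)) ∈ interior P ∧
      0 < (-σ) * cr (R (f τ) - B (g τ)) (y - B (g τ))} := by
    rintro τ ⟨hτ, h1, h2⟩
    obtain ⟨y, hy, l, hl, hyl⟩ := hcon τ hτ h1 h2
    have hne := hsub τ ⟨hτ, h1, h2⟩
    have hσ0 : σ ≠ 0 := by
      rintro rfl
      have := hσ (1/2) (1/2) (by norm_num) (by norm_num) (by norm_num) (by norm_num) (by norm_num)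
        (by norm_num)
      have := this.1 1 (by norm_num) (by norm_num) (by norm_num)
      simp at this
    have hU : IsOpen (interior P ∩ (fun y => y + l • (R (f τ) - B (g τ))) ⁻¹' interior P) :=
      isOpen_interior.inter (isOpen_interior.preimage (by fun_prop))
    have hy2 : y ∈ interior (interior P ∩ (fun y => y + l • (R (f τ) - B (g τ))) ⁻¹' interior P) := by
      rw [hU.interior_eq]; exact ⟨hy, hyl⟩
    have fin : ∀ y, y ∈ interior P → y + l • (R (f τ) - B (g τ)) ∈ interior P →
        σ * cr (R (f τ) - B (g τ)) (y - B (g τ)) ≠ 0 →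
        τ ∈ {τ | ∃ y ∈ interior P, ∃ l : ℝ, 1 < l ∧
      y + l • (R (f τ) - B (g τ)) ∈ interior P ∧
      0 < σ * cr (R (f τ) - B (g τ)) (y - B (g τ))} ∪
        {τ | ∃ y ∈ interior P, ∃ l : ℝ, 1 < l ∧
      y + l • (R (f τ) - B (g τ)) ∈ interior P ∧
      0 < (-σ) * cr (R (f τ) - B (g τ)) (y - B (g τ))} := by
      intro y hy hyl hn
      rcases lt_or_gt_of_ne hn with h | h
      · exact Or.inr ⟨y, hy, l, hl, hyl, by linarith⟩
      · exact Or.inl ⟨y, hy, l, hl, hyl, h⟩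
    by_cases hz : σ * cr (R (f τ) - B (g τ)) (y - B (g τ)) = 0
    · obtain ⟨x, hx, hlt⟩ := exists_lt_of_interior hy2 (sub_ne_zero.2 hne)
      rw [hU.interior_eq] at hx
      refine fin x hx.1 hx.2 (mul_ne_zero hσ0 ?_)
      have := (mul_eq_zero.1 hz).resolve_left hσ0
      rw [cr_sub] at this ⊢
      intro h; linarith
    · exact fin y hy hyl hz
  have hn1 : ({τ | τ ∈ Icc (0:ℝ) 1 ∧ 0 < f τ + g τ ∧ f τ + g τ < 2} ∩ {τ | ∃ y ∈ interior P, ∃ l : ℝ, 1 < l ∧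
      y + l • (R (f τ) - B (g τ)) ∈ interior P ∧
      0 < σ * cr (R (f τ) - B (g τ)) (y - B (g τ))}).Nonempty := by
    obtain ⟨τ, h1, h2, h3, l, hl, h4, h5⟩ := c.near_start hρ hb hf hg (σ := σ)
      (fun s t p1 p2 p3 p4 p5 p6 => ⟨(hσ s t p1 p2 p3 p4 p5 p6).1, (hσ s t p1 p2 p3 p4 p5 p6).2.1⟩)
    exact ⟨τ, ⟨h1, h2, h3⟩, i, hi, l, hl, h4, h5⟩
  have hn2 : ({τ | τ ∈ Icc (0:ℝ) 1 ∧ 0 < f τ + g τ ∧ f τ + g τ < 2} ∩ {τ | ∃ y ∈ interior P, ∃ l : ℝ, 1 < l ∧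
      y + l • (R (f τ) - B (g τ)) ∈ interior P ∧
      0 < (-σ) * cr (R (f τ) - B (g τ)) (y - B (g τ))}).Nonempty := by
    obtain ⟨τ, h1, h2, h3, l, hl, h4, h5⟩ := c.rev.near_start hρ hb hf.rev hg.rev (σ := -σ) (by
      intro s t p1 p2 p3 p4 p5 p6
      have h := hσ (1 - s) (1 - t) (by linarith) (by linarith) (by linarith) (by linarith)
        (by linarith) (by linarith)
      refine ⟨fun s' q1 q2 q3 => ?_, fun s' q1 q2 q3 => ?_⟩
      · have := h.2.2.1 (1 - s') (by linarith) (by linarith) (by linarith)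
        linarith
      · have := h.2.2.2 (1 - s') (by linarith) (by linarith) (by linarith)
        linarith)
    simp only [sub_sub_cancel] at h4 h5
    exact ⟨1 - τ, ⟨⟨by linarith [h1.2], by linarith [h1.1]⟩, by linarith, by linarith⟩,
      i, hi, l, hl, h4, h5⟩
  obtain ⟨τ, hτ, ⟨y, hy, l, hl, hyl, hyp⟩, ⟨y', hy', l', hl', hyl', hyp'⟩⟩ :=
    hJ _ _ (hopen σ) (hopen (-σ)) hcover hn1 hn2
  · -- disjointness
    have hne := hsub τ hτ
    set r := R (f τ)
    set b := B (g τ)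
    set A := σ * cr (r - b) (y - b)
    set A' := -σ * cr (r - b) (y' - b)
    have hσ0 : σ ≠ 0 := by rintro h; simp [A, h] at hyp
    have hA : 0 < A + A' := by linarith
    have hm1 := c.cvx.interior hy hy' (div_nonneg hyp'.le hA.le) (div_nonneg hyp.le hA.le)
      (by field_simp; ring)
    have hm2 := c.cvx.interior hyl hyl' (div_nonneg hyp'.le hA.le) (div_nonneg hyp.le hA.le)
      (by field_simp; ring)
    have hz : cr (r - b) ((A' / (A + A')) • y + (A / (A + A')) • y' - b) = 0 := by
      have : σ * cr (r - b) ((A' / (A + A')) • y + (A / (A + A')) • y' - b) = 0 := by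
        have eb : b = (A' / (A + A')) • b + (A / (A + A')) • b := by
          rw [← add_smul, ← add_div, add_comm A', div_self hA.ne', one_smul]
        have : (A' / (A + A')) • y + (A / (A + A')) • y' - b =
            (A' / (A + A')) • (y - b) + (A / (A + A')) • (y' - b) := by
          conv_lhs => rw [eb]
          module
        rw [this, cr_add, cr_smul, cr_smul, mul_add]
        have e1 : σ * (A' / (A + A') * cr (r - b) (y - b)) = A' / (A + A') * A := by
          simp only [A]; ring
        have e2 : σ * (A / (A + A') * cr (r - b) (y' - b)) = - (A / (A + A') * A') := by
          simp only [A']; ring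
        rw [e1, e2]; ring
      exact (mul_eq_zero.1 this).resolve_left hσ0
    obtain ⟨κ, hκ⟩ := cr_eq_zero (sub_ne_zero.2 hne) hz
    set Y := (A' / (A + A')) • y + (A / (A + A')) • y' with hY
    set M := (A' / (A + A')) * l + (A / (A + A')) * l' with hM
    have hM1 : 1 < M := by
      have : 0 < (A' / (A + A')) * (l - 1) + (A / (A + A')) * (l' - 1) :=
        add_pos (mul_pos (div_pos hyp' hA) (by linarith)) (mul_pos (div_pos hyp hA) (by linarith))
      have e : A' / (A + A') + A / (A + A') = 1 := by field_simp; ring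
      rw [hM]; linarith
    have hX : Y + M • (r - b) ∈ interior P := by
      convert hm2 using 1
      rw [hY, hM]; module
    have eY : Y = b + κ • (r - b) := by rw [← hκ]; abel
    have rf : r ∈ frontier P := c.Rf (hf.I τ)
    have bf : b ∈ frontier P := c.Bf (hg.I τ)
    have rP : r ∈ P := c.RP (hf.I τ)
    have bP : b ∈ P := c.BP (hg.I τ)
    rw [c.cpt.isClosed.frontier_eq] at rf bf
    by_cases hk : 0 ≤ κ
    · apply rf.2
      apply c.cvx.openSegment_interior_self_subset_interior hX bP
      have hp : 0 < κ + M := by linarith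
      refine ⟨1 / (κ + M), 1 - 1 / (κ + M), by positivity, ?_, by ring, ?_⟩
      · rw [sub_pos, div_lt_one hp]; linarith
      · rw [eY]
        have : (1 / (κ + M)) • (b + κ • (r - b) + M • (r - b)) + (1 - 1 / (κ + M)) • b =
          b + (1 / (κ + M) * (κ + M)) • (r - b) := by module
        rw [this, one_div_mul_cancel hp.ne']; module
    · apply bf.2
      push Not at hk
      rw [eY] at hm1
      apply c.cvx.openSegment_interior_self_subset_interior hm1 rP
      have hp : 0 < 1 - κ := by linarith
      refine ⟨1 / (1 - κ), 1 - 1 / (1 - κ), by positivity, ?_, by ring, ?_⟩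
      · rw [sub_pos, div_lt_one hp]; linarith
      · have : (1 / (1 - κ)) • (b + κ • (r - b)) + (1 - 1 / (1 - κ)) • r =
          b + (1 - (1 / (1 - κ)) * (1 - κ)) • (r - b) := by module
        rw [this, one_div_mul_cancel hp.ne']; module

lemma width (c : Cfg P R B) {r b : E2} (hr : r ∈ P) (hb : b ∈ P) 
    (h : ∀ y ∈ interior P, ∀ l : ℝ, 1 < l → y + l • (r - b) ∉ interior P) :
    ∃ w : E2, 0 < cr w (r - b) ∧ ∀ x ∈ P, cr w b ≤ cr w x ∧ cr w x ≤ cr w r := by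
  have hcl : P ⊆ closure (interior P) := by
    rw [c.cvx.closure_interior_eq_closure_of_nonempty_interior c.ne]; exact subset_closure
  have hT : IsOpen ((fun y => y - (r - b)) ⁻¹' interior P) := isOpen_interior.preimage (by fun_prop)
  have hTc : Convex ℝ ((fun y => y - (r - b)) ⁻¹' interior P) := by
    have := c.cvx.interior.translate_preimage_left (-(r - b))
    simpa [sub_eq_add_neg] using this
  have hdis : Disjoint (interior P) ((fun y => y - (r - b)) ⁻¹' interior P) := by
    rw [Set.disjoint_left]
    intro x hx hx'
    simp only [mem_preimage] at hx'
    have hc : Continuous (fun k : ℝ => x + k • (r - b)) := by fun_prop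
    have h0 : (fun k : ℝ => x + k • (r - b)) 0 ∈ interior P := by simpa using hx
    obtain ⟨ε, hε, hball⟩ := Metric.mem_nhds_iff.1
      (hc.continuousAt.preimage_mem_nhds (isOpen_interior.mem_nhds h0))
    have h2 : ε / 2 ∈ Metric.ball (0:ℝ) ε := by simp [abs_of_pos hε]; exact hε
    apply h _ hx' (1 + ε / 2) (by linarith)
    have := hball h2
    simp only [mem_preimage] at this
    convert this using 1
    module
  obtain ⟨φ, k, h1, h2⟩ := geometric_hahn_banach_open_open c.cvx.interior isOpen_interior hTc hT hdis
  obtain ⟨w, hw⟩ := exists_cr φ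
  have h1' : ∀ x ∈ P, cr w x ≤ k := by
    intro x hx
    have : closure (interior P) ⊆ {x | cr w x ≤ k} :=
      closure_minimal (fun x hx => by have := h1 x hx; rw [hw] at this; exact this.le)
        (isClosed_le (cr_cont w) continuous_const)
    exact this (hcl hx)
  have h2' : ∀ x ∈ P, k ≤ cr w x + cr w (r - b) := by
    intro x hx
    have : closure (interior P) ⊆ {x | k ≤ cr w x + cr w (r - b)} :=
      closure_minimal (fun x hx => by
        have := h2 (x + (r - b)) (by simpa using hx)
        rw [hw, cr_add] at this; exact this.le)
        (isClosed_le continuous_const ((cr_cont w).add continuous_const))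
    exact this (hcl hx)
  obtain ⟨i, hi⟩ := c.ne
  have i1 := h1 i hi
  have i2 := h2' i (interior_subset hi)
  rw [hw] at i1
  refine ⟨w, by linarith, fun x hx => ?_⟩
  have a1 := h1' x hx
  have a2 := h2' x hx
  have b1 := h2' b hb
  have b2 := h1' r hr
  have b3 := h2' r hr
  rw [cr_sub] at *
  constructor <;> linarith

end Cfg

namespace Cfg
variable {P : Set E2} {R B : ℝ → E2}

lemma fan_ii (c : Cfg P R B) (sc : StrictConvex ℝ P) {ss tt : ℝ} (hs : ss ∈ Icc (0:ℝ) 1)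
    (ht : tt ∈ Icc (0:ℝ) 1) {w : E2} (hw : w ≠ 0)
    (hX : ∀ x ∈ P, cr w (B tt) ≤ cr w x ∧ cr w x ≤ cr w (R ss)) {t : ℝ} (h0 : 0 ≤ t) (h1 : t ≤ tt) :
    cr w (B t) ≤ cr w (R 0) := by
  by_contra hcon
  push Not at hcon
  obtain ⟨d, hd1, hd2⟩ := exists_between hcon
  have i0 : (0:ℝ) ∈ Icc (0:ℝ) 1 := by simp
  have i1 : (1:ℝ) ∈ Icc (0:ℝ) 1 := by simp
  have it : t ∈ Icc (0:ℝ) 1 := ⟨h0, h1.trans ht.2⟩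
  have hB0 : cr w (B tt) ≤ cr w (R 0) := (hX _ (c.RP i0)).1
  have hRs : cr w (B t) ≤ cr w (R ss) := (hX _ (c.BP it)).2
  obtain ⟨a, ha, ea⟩ := ivt_up c.Bc w (d := d) le_rfl h0 it.2 (by rw [← c.h0]; exact hd1.le) hd2.le
  obtain ⟨b, hb, eb⟩ := ivt_down c.Bc w (d := d) h0 h1 ht.2 hd2.le (by linarith)
  have a0 : a ≠ 0 := by rintro rfl; rw [← c.h0] at ea; linarith
  have at' : a ≠ t := by rintro rfl; linarith
  have bt : b ≠ t := by rintro rfl; linarith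
  have btt : b ≠ tt := by rintro rfl; linarith
  have alt : a < t := lt_of_le_of_ne ha.2 at'
  have tlb : t < b := lt_of_le_of_ne hb.1 bt.symm
  have blt : b < tt := lt_of_le_of_ne hb.2 btt
  have apos : 0 < a := lt_of_le_of_ne ha.1 a0.symm
  have ia : a ∈ Icc (0:ℝ) 1 := ⟨ha.1, by linarith [ht.2]⟩
  have ib : b ∈ Icc (0:ℝ) 1 := ⟨by linarith, by linarith [ht.2]⟩
  have nab : B a ≠ B b := fun h => by have := c.Bi ia ib h; linarith
  by_cases hq : d ≤ cr w (R 1)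
  · obtain ⟨k, hk, ek⟩ := ivt_up c.Bc w (d := d) ht.1 ht.2 le_rfl (by linarith)
      (by rw [← c.h1]; exact hq)
    have ik : k ∈ Icc (0:ℝ) 1 := ⟨by linarith [hk.1, ht.1], hk.2⟩
    exact c.three sc hw (c.Bf ia) (c.Bf ib) (c.Bf ik) (by rw [ea, eb]) (by rw [eb, ek]) nab
      (fun h => by have := c.Bi ib ik h; linarith [hk.1])
      (fun h => by have := c.Bi ia ik h; linarith [hk.1])
  · obtain ⟨k, hk, ek⟩ := ivt_down c.Rc w (d := d) hs.1 hs.2 le_rfl (by linarith) (by linarith)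
    have ik : k ∈ Icc (0:ℝ) 1 := ⟨by linarith [hk.1, hs.1], hk.2⟩
    exact c.three sc hw (c.Bf ia) (c.Bf ib) (c.Rf ik) (by rw [ea, eb]) (by rw [eb, ek]) nab
      (fun h => by rcases c.RB ik ib h.symm with ⟨_, h⟩ | ⟨_, h⟩ <;> linarith [ht.2])
      (fun h => by rcases c.RB ik ia h.symm with ⟨_, h⟩ | ⟨_, h⟩ <;> linarith [ht.2])

lemma _root_.seg_of_levels {w e p h y : E2} (hwe : cr w e ≠ 0) (h1 : cr w h = cr w p)
    (h2 : cr w y = cr w p) (h3 : cr e h < cr e p) (h4 : cr e p ≤ cr e y) :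
    ∃ θ : ℝ, 0 < θ ∧ θ ≤ 1 ∧ (cr e p < cr e y → θ < 1) ∧ p = (1 - θ) • h + θ • y := by
  have hpos : 0 < cr e y - cr e h := by linarith
  refine ⟨(cr e p - cr e h) / (cr e y - cr e h), div_pos (by linarith) hpos,
    (div_le_one hpos).2 (by linarith), fun h => (div_lt_one hpos).2 (by linarith), ?_⟩
  apply cr_uniq hwe
  · rw [cr_add, cr_smul, cr_smul, h1, h2]; ring
  · rw [cr_add, cr_smul, cr_smul]; field_simp; ring

lemma fan (c : Cfg P R B) (sc : StrictConvex ℝ P) {ss tt : ℝ} (hs : ss ∈ Icc (0:ℝ) 1)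
    (ht : tt ∈ Icc (0:ℝ) 1) (hlt : ss + tt < 2) {w : E2} (hw : 0 < cr w (R ss - B tt))
    (hX : ∀ x ∈ P, cr w (B tt) ≤ cr w x ∧ cr w x ≤ cr w (R ss))
    {k : ℝ} (hk : k ≠ 0) {e : E2} (he : e = k • (R ss - B tt))
    (hmono : ∀ s, ss ≤ s → s ≤ 1 → cr e (R ss) ≤ cr e (R s))
    (hp : cr e (R 0) ≤ cr e (R ss)) {C : ℝ} (hD : ‖R ss - B tt‖ ≤ C) {s t : ℝ}
    (is : s ∈ Icc (0:ℝ) 1) (it : t ∈ Icc (0:ℝ) 1) (hlow : cr e (R s) < cr e (R 0))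
    (hle : s < ss → t ≤ tt) (hst : ‖R s - B t‖ ≤ C) : ‖R s - R 0‖ ≤ C := by
  have hwe : cr w e ≠ 0 := by rw [he, cr_smul]; exact mul_ne_zero hk hw.ne'
  have hw0 : w ≠ 0 := by rintro rfl; simp [cr] at hw
  have he0 : e ≠ 0 := by rintro h; rw [h] at hwe; simp [cr] at hwe
  have i0 : (0:ℝ) ∈ Icc (0:ℝ) 1 := by simp
  have heq : cr e (R ss) = cr e (B tt) := by
    have : cr e (R ss - B tt) = 0 := by rw [he, smul_cr, cr_self, mul_zero]
    rw [cr_sub] at this; linarith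
  have hsss : s < ss := by
    by_contra h
    have := hmono s (not_lt.1 h) is.2
    linarith
  have s0 : 0 < s := by
    rcases is.1.eq_or_lt with h | h
    · rw [← h] at hlow; exact absurd hlow (lt_irrefl _)
    · exact h
  have htt := hle hsss
  rcases it.1.eq_or_lt with t0 | t0
  · rw [← t0, ← c.h0] at hst; exact hst
  have Xb : cr w (B t) ≤ cr w (R 0) := c.fan_ii sc hs ht hw0 hX it.1 htt
  have XW : cr w (R 0) ≤ cr w (R s) := by
    have := c.swap.fan_ii sc ht hs (w := -w) (neg_ne_zero.2 hw0) (fun x hx => by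
      simp only [neg_cr]; constructor <;> linarith [(hX x hx).1, (hX x hx).2]) is.1 hsss.le
    simp only [neg_cr] at this
    rw [c.h0]; linarith
  have Lb : cr e (R 0) ≤ cr e (B t) := by
    by_contra hcon
    push Not at hcon
    obtain ⟨a, ha, ea⟩ := ivt_up c.Bc e (d := cr e (R 0)) it.1 htt ht.2 hcon.le (by linarith)
    obtain ⟨b, hb, eb⟩ := ivt_up c.Rc e (d := cr e (R 0)) is.1 hsss.le hs.2 hlow.le (by linarith)
    have ia : a ∈ Icc (0:ℝ) 1 := ⟨by linarith [ha.1], by linarith [ha.2, ht.2]⟩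
    have ib : b ∈ Icc (0:ℝ) 1 := ⟨by linarith [hb.1], by linarith [hb.2, hs.2]⟩
    refine c.three sc he0 (c.Rf i0) (c.Rf ib) (c.Bf ia) eb.symm (by rw [ea, eb])
      (fun h => ?_) (fun h => ?_) (fun h => ?_)
    · have := c.Ri i0 ib h; linarith [hb.1]
    · rcases c.RB ib ia h with ⟨h, _⟩ | ⟨h, h'⟩
      · linarith [hb.1]
      · linarith [hb.2, ha.2]
    · rcases c.RB i0 ia h with ⟨_, h⟩ | ⟨h, h'⟩
      · linarith [ha.1]
      · linarith
  have Xlt : cr w (B t) < cr w (R s) := by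
    by_contra hcon
    have e1 : cr w (B t) = cr w (R 0) := by linarith
    have e2 : cr w (R 0) = cr w (R s) := by linarith
    refine c.three sc hw0 (c.Bf it) (c.Rf i0) (c.Rf is) e1 e2
      (fun h => ?_) (fun h => ?_) (fun h => ?_)
    · rcases c.RB i0 it h.symm with ⟨_, h⟩ | ⟨h, h'⟩ <;> linarith
    · have := c.Ri i0 is h; linarith
    · rcases c.RB is it h.symm with ⟨h, _⟩ | ⟨h, h'⟩ <;> linarith [hs.2]
  -- the point y
  have hd : 0 < cr w (R s) - cr w (B t) := by linarith
  set κ := (cr w (R 0) - cr w (B t)) / (cr w (R s) - cr w (B t)) with hκ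
  have κ0 : 0 ≤ κ := div_nonneg (by linarith) hd.le
  have κ1 : κ ≤ 1 := (div_le_one hd).2 (by linarith)
  set y := (1 - κ) • B t + κ • R s with hy
  have yP : y ∈ P := c.cvx (c.BP it) (c.RP is) (by linarith) κ0 (by ring)
  have Xy : cr w y = cr w (R 0) := by
    rw [hy, cr_add, cr_smul, cr_smul, hκ]; field_simp; ring
  have hDne : R ss - B tt ≠ 0 := by rintro h; rw [h] at hw; simp [cr] at hw
  set X0 := cr w (R ss - B tt) with hX0
  have X0e : X0 = cr w (R ss) - cr w (B tt) := by rw [hX0, cr_sub]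
  have b0 := hX _ (c.RP i0)
  have bs := hX _ (c.RP is)
  have Ly : cr e (R 0) ≤ cr e y := by
    by_contra hcon
    push Not at hcon
    set κ2 := (cr w (R 0) - cr w (B tt)) / X0 with hκ2
    have κ20 : 0 ≤ κ2 := div_nonneg (by linarith) hw.le
    have κ21 : κ2 ≤ 1 := (div_le_one hw).2 (by linarith)
    set y2 := (1 - κ2) • B tt + κ2 • R ss with hy2
    have y2P : y2 ∈ P := c.cvx (c.BP ht) (c.RP hs) (by linarith) κ20 (by ring)
    have Xy2 : cr w y2 = cr w (R 0) := by
      have : y2 = B tt + κ2 • (R ss - B tt) := by rw [hy2]; module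
      rw [this, cr_add, cr_smul, ← hX0, hκ2]; field_simp; ring
    have Ly2 : cr e y2 = cr e (R ss) := by
      rw [hy2, cr_add, cr_smul, cr_smul, heq]; ring
    rcases hp.eq_or_lt with h | h
    · by_cases hb : R 0 = B tt
      · rcases c.RB i0 ht hb with ⟨_, h⟩ | ⟨h, _⟩ <;> linarith
      · exact c.three sc he0 (c.Rf i0) (c.Bf ht) (c.Rf hs) (by linarith) (by linarith) hb
          (fun h => hDne (by rw [h, sub_self]))
          (fun h => by have := c.Ri i0 hs h; linarith)
    · obtain ⟨θ, t1, t2, t3, t4⟩ := seg_of_levels hwe Xy Xy2 hcon (by linarith)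
      have hi : R 0 ∈ interior P := by
        rw [t4]
        refine sc yP y2P (fun h' => ?_) (by linarith [t3 (by linarith)]) t1 (by ring)
        rw [h'] at hcon; linarith
      have := c.Rf i0
      rw [c.cpt.isClosed.frontier_eq] at this
      exact this.2 hi
  set κ3 := (cr w (R s) - cr w (R 0)) / X0 with hκ3
  have κ30 : 0 ≤ κ3 := div_nonneg (by linarith) hw.le
  have κ31 : κ3 ≤ 1 := (div_le_one hw).2 (by linarith)
  set h := R s - κ3 • (R ss - B tt) with hh
  have Xh : cr w h = cr w (R 0) := by
    rw [hh, cr_sub, cr_smul, ← hX0, hκ3]; field_simp; ring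
  have Lh : cr e h = cr e (R s) := by
    rw [hh, cr_sub, cr_smul, cr_sub, heq]; ring
  obtain ⟨θ, t1, t2, t3, t4⟩ := seg_of_levels hwe Xh Xy (by linarith) Ly
  have hb1 : h ∈ Metric.closedBall (R s) C := by
    rw [Metric.mem_closedBall, dist_eq_norm, hh, sub_sub_cancel_left, norm_neg, norm_smul,
      Real.norm_of_nonneg κ30]
    nlinarith [norm_nonneg (R ss - B tt)]
  have hb2 : y ∈ Metric.closedBall (R s) C := by
    rw [Metric.mem_closedBall, dist_eq_norm, hy]
    have : (1 - κ) • B t + κ • R s - R s = (1 - κ) • (-(R s - B t)) := by module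
    rw [this, norm_smul, norm_neg, Real.norm_of_nonneg (by linarith)]
    nlinarith [norm_nonneg (R s - B t)]
  have := (convex_closedBall (R s) C) hb1 hb2 (by linarith : 0 ≤ 1 - θ) t1.le (by ring)
  rw [← t4, Metric.mem_closedBall, dist_eq_norm, norm_sub_rev] at this
  exact this

end Cfg

/-- the limit-stable certificate -/
structure Good (C : ℝ) (R B : ℝ → E2) (u w : E2) : Prop where
  nu : ‖u‖ = 1
  wu : cr w u = 1
  wd : ∀ x ∈ R '' Icc (0:ℝ) 1 ∪ B '' Icc (0:ℝ) 1, ∀ y ∈ R '' Icc (0:ℝ) 1 ∪ B '' Icc (0:ℝ) 1,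
    cr w (x - y) ≤ C
  pq : cr u (R 0) ≤ cr u (R 1)
  Rp : ∀ s ∈ Icc (0:ℝ) 1, cr u (R s) < cr u (R 0) → ‖R s - R 0‖ ≤ C
  Bp : ∀ s ∈ Icc (0:ℝ) 1, cr u (B s) < cr u (B 0) → ‖B s - B 0‖ ≤ C
  Rq : ∀ s ∈ Icc (0:ℝ) 1, cr u (R 1) < cr u (R s) → ‖R s - R 1‖ ≤ C
  Bq : ∀ s ∈ Icc (0:ℝ) 1, cr u (B 1) < cr u (B s) → ‖B s - B 1‖ ≤ C

namespace Cfg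
variable {P : Set E2} {R B : ℝ → E2}

lemma Par.surj {f : ℝ → ℝ} (h : Par f) {s : ℝ} (hs : s ∈ Icc (0:ℝ) 1) :
    ∃ τ ∈ Icc (0:ℝ) 1, f τ = s := by
  have := intermediate_value_Icc (zero_le_one' ℝ) h.c.continuousOn
  rw [h.z, h.o] at this
  exact this hs

lemma good (c : Cfg P R B) (sc : StrictConvex ℝ P) {f g : ℝ → ℝ} (hf : Par f) (hg : Par g) {C : ℝ}
    (hC : ∀ τ ∈ Icc (0:ℝ) 1, ‖R (f τ) - B (g τ)‖ ≤ C) :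
    ∃ u w : E2, Good C R B u w ∧ ∀ x ∈ P, ∀ y ∈ P, cr w (x - y) ≤ C := by
  obtain ⟨σ, hσ1, hσ⟩ := c.orient sc
  obtain ⟨τ, hτ, h0, h2, hanti⟩ := c.antip sc hf hg hσ
  have hs := hf.I τ
  have ht := hg.I τ
  obtain ⟨w, hw, hX⟩ := c.width (c.RP hs) (c.BP ht) hanti
  have hD := hC τ hτ
  have htr : ∀ τ' s, f τ' = s → s < f τ → g τ' ≤ g τ := by
    rintro τ' s rfl hlt
    apply hg.m
    by_contra h
    exact absurd (hf.m (not_le.1 h).le) (not_le.2 hlt)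
  have htr2 : ∀ τ' t, g τ' = t → t < g τ → f τ' ≤ f τ := by
    rintro τ' s rfl hlt
    apply hf.m
    by_contra h
    exact absurd (hg.m (not_le.1 h).le) (not_le.2 hlt)
  have htr3 : ∀ τ' s, f τ' = s → f τ < s → g τ ≤ g τ' := by
    rintro τ' s rfl hlt
    apply hg.m
    by_contra h
    exact absurd (hf.m (not_le.1 h).le) (not_le.2 hlt)
  have htr4 : ∀ τ' t, g τ' = t → g τ < t → f τ ≤ f τ' := by
    rintro τ' s rfl hlt
    apply hf.m
    by_contra h
    exact absurd (hg.m (not_le.1 h).le) (not_le.2 hlt)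
  set ss := f τ
  set tt := g τ
  have hσ0 : σ ≠ 0 := by rcases hσ1 with h | h <;> rw [h] <;> norm_num
  set e := σ • (R ss - B tt) with he
  have ecr : ∀ x, cr e x = σ * cr (R ss - B tt) x := fun x => by rw [he, smul_cr]
  have heq : cr e (R ss) = cr e (B tt) := by
    have : cr e (R ss - B tt) = 0 := by rw [he, smul_cr, cr_self, mul_zero]
    rw [cr_sub] at this; linarith
  have H := hσ ss tt hs.1 hs.2 ht.1 ht.2 h0 h2
  have m1 : ∀ s, ss ≤ s → s ≤ 1 → cr e (R ss) ≤ cr e (R s) := by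
    intro s a b
    rcases a.eq_or_lt with a | a
    · rw [a]
    by_cases hc : s + tt < 2
    · have := H.1 s a b hc
      rw [← ecr, cr_sub] at this; linarith
    · have e1 : s = 1 := by linarith [ht.2]
      have e2 : tt = 1 := by linarith [ht.2]
      rw [heq, e2, e1, c.h1]
  have m2 : ∀ t, tt ≤ t → t ≤ 1 → cr e (B tt) ≤ cr e (B t) := by
    intro s a b
    rcases a.eq_or_lt with a | a
    · rw [a]
    by_cases hc : ss + s < 2
    · have := H.2.1 s a b hc
      rw [← ecr, cr_sub] at this; linarith
    · have e1 : s = 1 := by linarith [hs.2]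
      have e2 : ss = 1 := by linarith [hs.2]
      rw [← heq, e2, e1, c.h1]
  have m3 : ∀ s, 0 ≤ s → s ≤ ss → cr e (R s) ≤ cr e (R ss) := by
    intro s b a
    rcases a.eq_or_lt with a | a
    · rw [a]
    by_cases hc : 0 < s + tt
    · have := H.2.2.1 s a b hc
      rw [← ecr, cr_sub] at this; linarith
    · have e1 : s = 0 := by linarith [ht.1]
      have e2 : tt = 0 := by linarith [ht.1]
      rw [heq, e2, e1, c.h0]
  have m4 : ∀ t, 0 ≤ t → t ≤ tt → cr e (B t) ≤ cr e (B tt) := by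
    intro s b a
    rcases a.eq_or_lt with a | a
    · rw [a]
    by_cases hc : 0 < ss + s
    · have := H.2.2.2 s a b hc
      rw [← ecr, cr_sub] at this; linarith
    · have e1 : s = 0 := by linarith [hs.1]
      have e2 : ss = 0 := by linarith [hs.1]
      rw [← heq, e2, e1, c.h0]
  have hDne : R ss - B tt ≠ 0 := by rintro h; rw [h] at hw; simp [cr] at hw
  have hn : 0 < ‖R ss - B tt‖ := norm_pos_iff.2 hDne
  set n := ‖R ss - B tt‖ with hndef
  set X0 := cr w (R ss - B tt) with hX0
  have X0e : X0 = cr w (R ss) - cr w (B tt) := by rw [hX0, cr_sub]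
  have hσσ : σ * σ = 1 := by rcases hσ1 with h | h <;> rw [h] <;> norm_num
  have ucr : ∀ x, cr (n⁻¹ • e) x = n⁻¹ * cr e x := fun x => smul_cr _ _ _
  have ult : ∀ x y, cr (n⁻¹ • e) x < cr (n⁻¹ • e) y → cr e x < cr e y := by
    intro x y h
    rw [ucr, ucr] at h
    exact lt_of_mul_lt_mul_left h (inv_nonneg.2 hn.le)
  have wb : ∀ x ∈ P, ∀ y ∈ P, cr ((n * σ / X0) • w) (x - y) ≤ C := by
    intro x hx y hy
    have a1 := hX x hx
    have a2 := hX y hy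
    rw [smul_cr, cr_sub]
    have key : σ * (cr w x - cr w y) ≤ X0 := by
      rcases hσ1 with h | h <;> rw [h] <;> linarith
    have : n * σ / X0 * (cr w x - cr w y) = n * ((σ * (cr w x - cr w y)) / X0) := by ring
    rw [this]
    have : (σ * (cr w x - cr w y)) / X0 ≤ 1 := (div_le_one hw).2 key
    nlinarith
  have sub : ∀ x ∈ R '' Icc (0:ℝ) 1 ∪ B '' Icc (0:ℝ) 1, x ∈ P := by
    intro x hx
    rw [c.bd] at hx
    exact c.cpt.isClosed.frontier_subset hx
  refine ⟨n⁻¹ • e, (n * σ / X0) • w, ⟨?_, ?_, fun x hx y hy => wb x (sub x hx) y (sub y hy),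
    ?_, ?_, ?_, ?_, ?_⟩, wb⟩
  · rw [norm_smul, he, norm_smul, norm_inv, Real.norm_of_nonneg hn.le, ← hndef]
    have : ‖σ‖ = 1 := by rcases hσ1 with h | h <;> rw [h] <;> norm_num
    rw [this]; field_simp
  · rw [smul_cr, cr_smul, he, cr_smul, ← hX0]
    field_simp
    nlinarith
  · rw [ucr, ucr]
    have a1 := m3 0 le_rfl hs.1
    have a2 := m1 1 hs.2 le_rfl
    exact mul_le_mul_of_nonneg_left (a1.trans a2) (inv_nonneg.2 hn.le)
  · intro s is hlow
    obtain ⟨τ', hτ', hs'⟩ := hf.surj is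
    exact c.fan sc hs ht h2 hw hX hσ0 he m1 (m3 0 le_rfl hs.1) hD is (hg.I τ') (ult _ _ hlow)
      (htr τ' s hs') (by rw [← hs']; exact hC τ' hτ')
  · intro s is hlow
    obtain ⟨τ', hτ', hs'⟩ := hg.surj is
    exact c.swap.fan sc (e := e) (k := -σ) ht hs (by linarith) (w := -w)
      (by rw [neg_cr, ← cr_neg, neg_sub]; exact hw)
      (fun x hx => by simp only [neg_cr]; constructor <;> linarith [(hX x hx).1, (hX x hx).2])
      (neg_ne_zero.2 hσ0) (by rw [he]; module)
      m2 (m4 0 le_rfl ht.1) (by rw [norm_sub_rev]; exact hD) is (hf.I τ') (ult _ _ hlow)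
      (htr2 τ' s hs') (by rw [← hs', norm_sub_rev]; exact hC τ' hτ')
  · intro s is hlow
    obtain ⟨τ', hτ', hs'⟩ := hf.surj is
    have := c.rev.fan sc (e := -e) (k := -σ) (ss := 1 - ss) (tt := 1 - tt) (s := 1 - s)
      (t := 1 - g τ') (w := w) (C := C)
      ⟨by linarith [hs.2], by linarith [hs.1]⟩ ⟨by linarith [ht.2], by linarith [ht.1]⟩ (by linarith)
      (by simp only [sub_sub_cancel]; exact hw) (by simp only [sub_sub_cancel]; exact hX)
      (neg_ne_zero.2 hσ0) (by simp only [sub_sub_cancel]; rw [he]; module)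
      (fun s a b => by
        simp only [sub_sub_cancel, neg_cr]
        linarith [m3 (1 - s) (by linarith) (by linarith)])
      (by simp only [sub_sub_cancel, neg_cr, sub_zero]; linarith [m1 1 hs.2 le_rfl])
      (by simp only [sub_sub_cancel]; exact hD)
      ⟨by linarith [is.2], by linarith [is.1]⟩
      ⟨by linarith [(hg.I τ').2], by linarith [(hg.I τ').1]⟩
      (by simp only [sub_sub_cancel, neg_cr, sub_zero]; linarith [ult _ _ hlow])
      (fun h => by linarith [htr3 τ' s hs' (by linarith)])
      (by simp only [sub_sub_cancel]; rw [← hs']; exact hC τ' hτ')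
    simpa using this
  · intro s is hlow
    obtain ⟨τ', hτ', hs'⟩ := hg.surj is
    have := c.rev.swap.fan sc (e := -e) (k := σ) (ss := 1 - tt) (tt := 1 - ss) (s := 1 - s)
      (t := 1 - f τ') (w := -w) (C := C)
      ⟨by linarith [ht.2], by linarith [ht.1]⟩ ⟨by linarith [hs.2], by linarith [hs.1]⟩ (by linarith)
      (by simp only [sub_sub_cancel]; rw [neg_cr, ← cr_neg, neg_sub]; exact hw)
      (fun x hx => by
        simp only [sub_sub_cancel, neg_cr]; constructor <;> linarith [(hX x hx).1, (hX x hx).2])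
      hσ0 (by simp only [sub_sub_cancel]; rw [he]; module)
      (fun s a b => by
        simp only [sub_sub_cancel, neg_cr]
        linarith [m4 (1 - s) (by linarith) (by linarith)])
      (by simp only [sub_sub_cancel, neg_cr, sub_zero]; linarith [m2 1 ht.2 le_rfl])
      (by simp only [sub_sub_cancel]; rw [norm_sub_rev]; exact hD)
      ⟨by linarith [is.2], by linarith [is.1]⟩
      ⟨by linarith [(hf.I τ').2], by linarith [(hf.I τ').1]⟩
      (by simp only [sub_sub_cancel, neg_cr, sub_zero]; linarith [ult _ _ hlow])
      (fun h => by linarith [htr4 τ' s hs' (by linarith)])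
      (by simp only [sub_sub_cancel]; rw [← hs', norm_sub_rev]; exact hC τ' hτ')
    simpa using this

end Cfg

namespace Cfg
variable {P : Set E2} {R B : ℝ → E2}

lemma map (c : Cfg P R B) {P' : Set E2} {T : E2 → E2} (hT : Continuous T)
    (hi : InjOn T (frontier P)) (h1 : IsCompact P') (h2 : Convex ℝ P') (h3 : (interior P').Nonempty)
    (h4 : T '' frontier P = frontier P') :
    Cfg P' (fun s => T (R s)) (fun s => T (B s)) where
  cpt := h1
  cvx := h2
  ne := h3
  Rc := hT.comp_continuousOn c.Rc
  Bc := hT.comp_continuousOn c.Bc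
  Ri := fun a ha b hb h => c.Ri ha hb (hi (c.Rf ha) (c.Rf hb) h)
  Bi := fun a ha b hb h => c.Bi ha hb (hi (c.Bf ha) (c.Bf hb) h)
  h0 := by rw [c.h0]
  h1 := by rw [c.h1]
  bd := by
    rw [← h4, ← c.bd, image_union, image_image, image_image]
  int := by
    have : T '' (R '' Icc (0:ℝ) 1 ∩ B '' Icc (0:ℝ) 1) = _ :=
      hi.image_inter (by rw [← c.bd]; exact subset_union_left)
        (by rw [← c.bd]; exact subset_union_right)
    rw [image_image, image_image, c.int, image_pair] at this
    exact this.symm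

end Cfg

/-- strictly convex perturbation of the squared gauge -/
def GG (P : Set E2) (ε : ℝ) (x : E2) : ℝ := gauge P x ^ 2 + ε * ‖x‖ ^ 2

def TT (ε : ℝ) (x : E2) : E2 := (Real.sqrt (1 + ε * ‖x‖ ^ 2))⁻¹ • x

lemma TT_cont {ε : ℝ} (hε : 0 ≤ ε) : Continuous (TT ε) := by
  unfold TT
  have hq : Continuous (fun x : E2 => Real.sqrt (1 + ε * ‖x‖ ^ 2)) := by fun_prop
  refine Continuous.smul (hq.inv₀ fun x => ?_) continuous_id
  have : 0 < 1 + ε * ‖x‖ ^ 2 := by positivity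
  exact (Real.sqrt_pos.2 this).ne'

lemma TT_close {ε : ℝ} (hε : 0 ≤ ε) {M : ℝ} {x : E2} (hx : ‖x‖ ≤ M) : ‖TT ε x - x‖ ≤ ε * M ^ 3 := by
  have ha : 0 ≤ ε * ‖x‖ ^ 2 := by positivity
  set a := ε * ‖x‖ ^ 2 with hadef
  set k := Real.sqrt (1 + a) with hk
  have hkk : k * k = 1 + a := Real.mul_self_sqrt (by linarith)
  have hk0 : 0 ≤ k := Real.sqrt_nonneg _
  have hk1 : 1 ≤ k := by nlinarith
  have h1 : 0 ≤ 1 - k⁻¹ := by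
    have := inv_le_one_of_one_le₀ hk1; linarith
  have h2 : 1 - k⁻¹ ≤ a := by
    have : k * k⁻¹ = 1 := mul_inv_cancel₀ (by linarith)
    have hi : 0 ≤ k⁻¹ := by positivity
    nlinarith
  have : TT ε x - x = (-(1 - k⁻¹)) • x := by
    show k⁻¹ • x - x = _
    module
  rw [this, norm_smul, norm_neg, Real.norm_of_nonneg h1]
  have hn := norm_nonneg x
  calc (1 - k⁻¹) * ‖x‖ ≤ a * ‖x‖ := mul_le_mul_of_nonneg_right h2 hn
    _ = ε * ‖x‖ ^ 3 := by rw [hadef]; ring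
    _ ≤ ε * M ^ 3 := by gcongr

lemma GG_smul (P : Set E2) (ε : ℝ) {k : ℝ} (hk : 0 ≤ k) (x : E2) : GG P ε (k • x) = k ^ 2 * GG P ε x := by
  unfold GG
  rw [gauge_smul_of_nonneg hk, norm_smul, Real.norm_of_nonneg hk, smul_eq_mul]; ring

namespace Cfg
variable {P : Set E2} {R B : ℝ → E2}

lemma GG_cont (c : Cfg P R B) (h0 : P ∈ nhds (0 : E2)) (ε : ℝ) : Continuous (GG P ε) := by
  unfold GG
  have := continuous_gauge c.cvx h0
  fun_prop

lemma GG_strict (c : Cfg P R B) (h0 : P ∈ nhds (0 : E2)) {ε : ℝ} (hε : 0 < ε) {x y : E2}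
    (hxy : x ≠ y) {a b : ℝ} (ha : 0 < a) (hb : 0 < b) (hab : a + b = 1) :
    GG P ε (a • x + b • y) < a * GG P ε x + b * GG P ε y := by
  have g1 : gauge P (a • x + b • y) ≤ a * gauge P x + b * gauge P y := by
    have := gauge_add_le c.cvx (absorbent_nhds_zero (𝕜 := ℝ) h0) (a • x) (b • y)
    rwa [gauge_smul_of_nonneg ha.le, gauge_smul_of_nonneg hb.le, smul_eq_mul, smul_eq_mul] at this
  have g0 : 0 ≤ gauge P (a • x + b • y) := gauge_nonneg _
  obtain rfl : b = 1 - a := by linarith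
  have g2 : gauge P (a • x + (1 - a) • y) ^ 2 ≤ a * gauge P x ^ 2 + (1 - a) * gauge P y ^ 2 := by
    have : gauge P (a • x + (1 - a) • y) ^ 2 ≤ (a * gauge P x + (1 - a) * gauge P y) ^ 2 := by
      gcongr
    have h2 : 0 ≤ a * (1 - a) * (gauge P x - gauge P y) ^ 2 := by positivity
    nlinarith
  have n : ‖a • x + (1 - a) • y‖ ^ 2 = a * ‖x‖ ^ 2 + (1 - a) * ‖y‖ ^ 2 - a * (1 - a) * ‖x - y‖ ^ 2 := by
    simp only [norm_sq_e2]; simp; ring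
  have hp : 0 < ‖x - y‖ := norm_pos_iff.2 (sub_ne_zero.2 hxy)
  have : 0 < ε * (a * (1 - a) * ‖x - y‖ ^ 2) := by positivity
  unfold GG
  rw [n]
  nlinarith

lemma perturb (c : Cfg P R B) (h0 : P ∈ nhds (0 : E2)) {ε : ℝ} (hε : 0 < ε) :
    StrictConvex ℝ {x | GG P ε x ≤ 1} ∧
    Cfg {x | GG P ε x ≤ 1} (fun s => TT ε (R s)) (fun s => TT ε (B s)) := by
  have hc := c.GG_cont h0 ε
  have hop : {x | GG P ε x < 1} ⊆ interior {x | GG P ε x ≤ 1} :=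
    interior_maximal (fun x (hx : GG P ε x < 1) => hx.le) (isOpen_lt hc continuous_const)
  have hcl : IsClosed {x | GG P ε x ≤ 1} := isClosed_le hc continuous_const
  have sc : StrictConvex ℝ {x | GG P ε x ≤ 1} := by
    intro x hx y hy hxy a b ha hb hab
    apply hop
    have := c.GG_strict h0 hε hxy ha hb hab
    have hx' : GG P ε x ≤ 1 := hx
    have hy' : GG P ε y ≤ 1 := hy
    show GG P ε _ < 1
    nlinarith
  have hsub : {x | GG P ε x ≤ 1} ⊆ P := by
    intro x hx
    have hx' : gauge P x ^ 2 + ε * ‖x‖ ^ 2 ≤ 1 := hx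
    have : gauge P x ≤ 1 := by
      have := gauge_nonneg (s := P) x
      have : 0 ≤ ε * ‖x‖ ^ 2 := by positivity
      nlinarith
    rw [gauge_le_one_iff_mem_closure c.cvx h0, c.cpt.isClosed.closure_eq] at this
    exact this
  have hfr : frontier {x | GG P ε x ≤ 1} = {x | GG P ε x = 1} := by
    rw [hcl.frontier_eq]
    ext x; constructor
    · rintro ⟨h1, h2⟩
      have h1' : GG P ε x ≤ 1 := h1
      by_contra hne
      exact h2 (hop (lt_of_le_of_ne h1' hne))
    · intro hx
      have hx : GG P ε x = 1 := hx
      refine ⟨hx.le, fun hi => ?_⟩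
      have hcc : Continuous (fun k : ℝ => (1 + k) • x) := by fun_prop
      have hz : (fun k : ℝ => (1 + k) • x) 0 ∈ interior {x | GG P ε x ≤ 1} := by simpa using hi
      obtain ⟨r, hr, hball⟩ := Metric.mem_nhds_iff.1
        (hcc.continuousAt.preimage_mem_nhds (isOpen_interior.mem_nhds hz))
      have h2 : r / 2 ∈ Metric.ball (0:ℝ) r := by simp [abs_of_pos hr]; exact hr
      have h3 : (1 + r / 2) • x ∈ {x | GG P ε x ≤ 1} := interior_subset (hball h2)
      rw [mem_ofPred_eq] at h3
      rw [GG_smul P ε (by linarith), hx] at h3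
      nlinarith
  have hg : ∀ x, x ∈ frontier P ↔ gauge P x = 1 := fun x =>
    (gauge_eq_one_iff_mem_frontier c.cvx h0).symm
  have hTG : ∀ x ∈ frontier P, GG P ε (TT ε x) = 1 := by
    intro x hx
    have hp : 0 < 1 + ε * ‖x‖ ^ 2 := by positivity
    unfold TT
    rw [GG_smul P ε (by positivity), GG, (hg x).1 hx, inv_pow, Real.sq_sqrt hp.le]
    field_simp
  refine ⟨sc, c.map (TT_cont hε.le) ?_ ?_ sc.convex ⟨0, hop ?_⟩ ?_⟩
  · intro x hx y hy hxy
    have hp : 0 < Real.sqrt (1 + ε * ‖x‖ ^ 2) := Real.sqrt_pos.2 (by positivity)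
    have hq : 0 < Real.sqrt (1 + ε * ‖y‖ ^ 2) := Real.sqrt_pos.2 (by positivity)
    unfold TT at hxy
    set p := Real.sqrt (1 + ε * ‖x‖ ^ 2)
    set q := Real.sqrt (1 + ε * ‖y‖ ^ 2)
    have e : x = (p * q⁻¹) • y := by
      rw [mul_smul, ← hxy, smul_smul, mul_inv_cancel₀ hp.ne', one_smul]
    have hx1 := (hg x).1 hx
    rw [e, gauge_smul_of_nonneg (by positivity), (hg y).1 hy, smul_eq_mul, mul_one] at hx1
    rw [e, hx1, one_smul]
  · exact c.cpt.of_isClosed_subset hcl hsub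
  · show GG P ε 0 < 1
    simp [GG]
  · rw [hfr]
    ext x; constructor
    · rintro ⟨x, hx, rfl⟩; exact hTG x hx
    · intro hx
      have hx : gauge P x ^ 2 + ε * ‖x‖ ^ 2 = 1 := hx
      have hx0 : x ≠ 0 := by rintro rfl; simp at hx
      have hgp : 0 < gauge P x := (gauge_pos (absorbent_nhds_zero (𝕜 := ℝ) h0)
        ((NormedSpace.isVonNBounded_iff ℝ).2 c.cpt.isBounded)).2 hx0
      refine ⟨(gauge P x)⁻¹ • x, ?_, ?_⟩
      · rw [hg, gauge_smul_of_nonneg (by positivity), smul_eq_mul, inv_mul_cancel₀ hgp.ne']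
      · unfold TT
        have : 1 + ε * ‖(gauge P x)⁻¹ • x‖ ^ 2 = ((gauge P x)⁻¹) ^ 2 := by
          rw [norm_smul, Real.norm_of_nonneg (by positivity)]
          field_simp
          linarith
        rw [this, Real.sqrt_sq (by positivity), smul_smul, inv_inv, mul_inv_cancel₀ hgp.ne', one_smul]

lemma limit0 (c : Cfg P R B) (h0 : P ∈ nhds (0 : E2)) {δ : ℝ}
    (hδ : ∀ η > 0, ∃ f g, Par f ∧ Par g ∧ ∀ τ ∈ Icc (0:ℝ) 1, ‖R (f τ) - B (g τ)‖ ≤ δ + η) :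
    ∃ u w, Good δ R B u w := by
  obtain ⟨M, hM⟩ := c.cpt.isBounded.exists_norm_le
  have hM0 : 0 ≤ M := (norm_nonneg _).trans (hM 0 (mem_of_mem_nhds h0))
  set ε : ℕ → ℝ := fun n => 1 / ((n:ℝ) + 1) with hεdef
  have hε : ∀ n, 0 < ε n := fun n => by simp only [hεdef]; positivity
  have hε1 : ∀ n, ε n ≤ 1 := fun n => by
    simp only [hεdef]; rw [div_le_one (by positivity)]; linarith [(Nat.cast_nonneg n : (0:ℝ) ≤ n)]
  have hεl : Filter.Tendsto ε Filter.atTop (nhds 0) := tendsto_one_div_add_atTop_nhds_zero_nat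
  set C : ℕ → ℝ := fun n => δ + ε n + 2 * (ε n * M ^ 3) with hC
  have hCl : Filter.Tendsto C Filter.atTop (nhds δ) := by
    have : Filter.Tendsto (fun n => δ + ε n + 2 * (ε n * M ^ 3)) Filter.atTop
      (nhds (δ + 0 + 2 * (0 * M ^ 3))) := by
      exact (tendsto_const_nhds.add hεl).add ((hεl.mul_const _).const_mul _)
    simpa using this
  have hgood : ∀ n, ∃ u w : E2, Good (C n) (fun s => TT (ε n) (R s)) (fun s => TT (ε n) (B s)) u w ∧
      ∀ x ∈ {x | GG P (ε n) x ≤ 1}, ∀ y ∈ {x | GG P (ε n) x ≤ 1}, cr w (x - y) ≤ C n := by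
    intro n
    obtain ⟨sc, c'⟩ := c.perturb h0 (hε n)
    obtain ⟨f, g, hf, hg, hfg⟩ := hδ (ε n) (hε n)
    apply c'.good sc hf hg
    intro τ hτ
    have a1 := TT_close (hε n).le (hM _ (c.RP (hf.I τ)))
    have a2 := TT_close (hε n).le (hM _ (c.BP (hg.I τ)))
    have a3 := hfg τ hτ
    have : TT (ε n) (R (f τ)) - TT (ε n) (B (g τ)) = (TT (ε n) (R (f τ)) - R (f τ)) -
      (TT (ε n) (B (g τ)) - B (g τ)) + (R (f τ) - B (g τ)) := by abel
    rw [this]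
    have b1 := norm_add_le ((TT (ε n) (R (f τ)) - R (f τ)) -
      (TT (ε n) (B (g τ)) - B (g τ))) (R (f τ) - B (g τ))
    have b2 := norm_sub_le (TT (ε n) (R (f τ)) - R (f τ)) (TT (ε n) (B (g τ)) - B (g τ))
    simp only [hC]; linarith
  choose u w hG hw using hgood
  -- a common ball
  obtain ⟨r, hr, hball⟩ : ∃ r > 0, ∀ x : E2, ‖x‖ ≤ r → GG P 1 x ≤ 1 := by
    have hc := c.GG_cont h0 1
    have : {x | GG P 1 x < 1} ∈ nhds (0:E2) :=
      (isOpen_lt hc continuous_const).mem_nhds (by show GG P 1 0 < 1; simp [GG])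
    obtain ⟨r, hr, hb⟩ := Metric.mem_nhds_iff.1 this
    refine ⟨r / 2, by linarith, fun x hx => ?_⟩
    have : x ∈ Metric.ball (0:E2) r := by rw [mem_ball_zero_iff]; linarith
    exact (hb this).le
  have hwn : ∀ n, ‖w n‖ ≤ (δ + 1 + 2 * M ^ 3) / r := by
    intro n
    rw [le_div_iff₀ hr]
    have hne : w n ≠ 0 := by
      intro h
      have := (hG n).wu
      rw [h] at this; simp [cr] at this
    have hp : 0 < ‖w n‖ := norm_pos_iff.2 hne
    have hx : GG P (ε n) ((r / ‖w n‖) • perp (w n)) ≤ 1 := by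
      have h1 : ‖(r / ‖w n‖) • perp (w n)‖ ≤ r := by
        rw [norm_smul, norm_perp, Real.norm_of_nonneg (by positivity)]
        field_simp; exact le_rfl
      refine le_trans ?_ (hball _ h1)
      unfold GG
      have := mul_le_mul_of_nonneg_right (hε1 n) (sq_nonneg ‖(r / ‖w n‖) • perp (w n)‖)
      linarith
    have := hw n _ hx 0 (by show GG P (ε n) 0 ≤ 1; simp [GG])
    rw [sub_zero, cr_smul, cr_perp, ← norm_sq_e2] at this
    have e : r / ‖w n‖ * ‖w n‖ ^ 2 = ‖w n‖ * r := by field_simp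
    rw [e] at this
    have hM3 : 0 ≤ M ^ 3 := by positivity
    have : C n ≤ δ + 1 + 2 * M ^ 3 := by
      simp only [hC]
      nlinarith [hε1 n]
    linarith
  have hK : IsCompact (Metric.closedBall (0:E2) 1 ×ˢ Metric.closedBall (0:E2) ((δ + 1 + 2 * M ^ 3) / r)) :=
    (isCompact_closedBall _ _).prod (isCompact_closedBall _ _)
  obtain ⟨⟨U, W⟩, -, φ, hφ, hlim⟩ := hK.tendsto_subseq (x := fun n => (u n, w n)) (fun n =>
    ⟨by rw [mem_closedBall_zero_iff, (hG n).nu], by rw [mem_closedBall_zero_iff]; exact hwn n⟩)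
  have hU : Filter.Tendsto (fun n => u (φ n)) Filter.atTop (nhds U) :=
    (continuous_fst.tendsto (U, W)).comp hlim
  have hW : Filter.Tendsto (fun n => w (φ n)) Filter.atTop (nhds W) :=
    (continuous_snd.tendsto (U, W)).comp hlim
  have hCl' := hCl.comp hφ.tendsto_atTop
  have hε' := hεl.comp hφ.tendsto_atTop
  have hT : ∀ x ∈ P, Filter.Tendsto (fun n => TT (ε (φ n)) x) Filter.atTop (nhds x) := by
    intro x hx
    rw [tendsto_iff_norm_sub_tendsto_zero]
    refine squeeze_zero (fun _ => norm_nonneg _) (fun n => TT_close (hε _).le (hM x hx)) ?_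
    simpa using hε'.mul_const (M ^ 3)
  have hcr : ∀ {a b : ℕ → E2} {a' b' : E2}, Filter.Tendsto a Filter.atTop (nhds a') →
      Filter.Tendsto b Filter.atTop (nhds b') →
      Filter.Tendsto (fun n => cr (a n) (b n)) Filter.atTop (nhds (cr a' b')) := by
    intro a b a' b' ha hb
    exact (cr_continuous.tendsto (a', b')).comp (ha.prodMk_nhds hb)
  have i0 : (0:ℝ) ∈ Icc (0:ℝ) 1 := by simp
  have i1 : (1:ℝ) ∈ Icc (0:ℝ) 1 := by simp
  have hPt : ∀ x ∈ R '' Icc (0:ℝ) 1 ∪ B '' Icc (0:ℝ) 1, x ∈ P := fun x hx => by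
    rw [c.bd] at hx; exact c.cpt.isClosed.frontier_subset hx
  have him : ∀ n, ∀ x ∈ R '' Icc (0:ℝ) 1 ∪ B '' Icc (0:ℝ) 1, TT (ε n) x ∈
      (fun s => TT (ε n) (R s)) '' Icc (0:ℝ) 1 ∪ (fun s => TT (ε n) (B s)) '' Icc (0:ℝ) 1 := by
    rintro n x (⟨s, hs, rfl⟩ | ⟨s, hs, rfl⟩)
    · exact Or.inl ⟨s, hs, rfl⟩
    · exact Or.inr ⟨s, hs, rfl⟩
  have hfan : ∀ x ∈ P, ∀ y ∈ P, (∀ n, cr (u n) (TT (ε n) x) < cr (u n) (TT (ε n) y) →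
      ‖TT (ε n) x - TT (ε n) y‖ ≤ C n) → cr U x < cr U y → ‖x - y‖ ≤ δ := by
    intro x hx y hy h hlt
    have hev := (hcr hU (hT x hx)).eventually_lt (hcr hU (hT y hy)) hlt
    exact le_of_tendsto_of_tendsto ((hT x hx).sub (hT y hy)).norm hCl' (hev.mono fun n hn => h _ hn)
  have hfan2 : ∀ x ∈ P, ∀ y ∈ P, (∀ n, cr (u n) (TT (ε n) y) < cr (u n) (TT (ε n) x) →
      ‖TT (ε n) x - TT (ε n) y‖ ≤ C n) → cr U y < cr U x → ‖x - y‖ ≤ δ := by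
    intro x hx y hy h hlt
    have hev := (hcr hU (hT y hy)).eventually_lt (hcr hU (hT x hx)) hlt
    exact le_of_tendsto_of_tendsto ((hT x hx).sub (hT y hy)).norm hCl' (hev.mono fun n hn => h _ hn)
  refine ⟨U, W, ⟨?_, ?_, ?_, ?_, ?_, ?_, ?_, ?_⟩⟩
  · exact tendsto_nhds_unique hU.norm (by simp [(hG _).nu])
  · exact tendsto_nhds_unique (hcr hW hU) (by simp [(hG _).wu])
  · intro x hx y hy
    exact le_of_tendsto_of_tendsto' (hcr hW ((hT x (hPt x hx)).sub (hT y (hPt y hy)))) hCl'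
      (fun n => (hG _).wd _ (him _ x hx) _ (him _ y hy))
  · exact le_of_tendsto_of_tendsto' (hcr hU (hT _ (c.RP i0))) (hcr hU (hT _ (c.RP i1)))
      (fun n => (hG _).pq)
  · exact fun s hs => hfan _ (c.RP hs) _ (c.RP i0) (fun n => (hG n).Rp s hs)
  · exact fun s hs => hfan _ (c.BP hs) _ (c.BP i0) (fun n => (hG n).Bp s hs)
  · exact fun s hs => hfan2 _ (c.RP hs) _ (c.RP i1) (fun n => (hG n).Rq s hs)
  · exact fun s hs => hfan2 _ (c.BP hs) _ (c.BP i1) (fun n => (hG n).Bq s hs)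

lemma limit (c : Cfg P R B) {δ : ℝ}
    (hδ : ∀ η > 0, ∃ f g, Par f ∧ Par g ∧ ∀ τ ∈ Icc (0:ℝ) 1, ‖R (f τ) - B (g τ)‖ ≤ δ + η) :
    ∃ u w, Good δ R B u w := by
  obtain ⟨i, hi⟩ := c.ne
  have h0 : (0:E2) ∈ interior (Homeomorph.subRight i '' P) := by
    rw [← Homeomorph.image_interior]
    exact ⟨i, hi, by simp⟩
  have c' : Cfg (Homeomorph.subRight i '' P) (fun s => Homeomorph.subRight i (R s))
      (fun s => Homeomorph.subRight i (B s)) := by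
    refine c.map (Homeomorph.subRight i).continuous (Homeomorph.subRight i).injective.injOn
      (c.cpt.image (Homeomorph.subRight i).continuous) ?_ ⟨0, h0⟩ (Homeomorph.image_frontier _ _)
    have := c.cvx.translate (-i)
    have e : (Homeomorph.subRight i : E2 → E2) = fun x => -i + x := by
      funext x
      show x - i = -i + x
      abel
    rw [e]; exact this
  obtain ⟨u, w, h⟩ := c'.limit0 (mem_interior_iff_mem_nhds.1 h0) (δ := δ) (by
    intro η hη
    obtain ⟨f, g, hf, hg, hfg⟩ := hδ η hη
    exact ⟨f, g, hf, hg, by simpa using hfg⟩)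
  refine ⟨u, w, ⟨h.nu, h.wu, ?_, ?_, ?_, ?_, ?_, ?_⟩⟩
  · intro x hx y hy
    have key : ∀ x ∈ R '' Icc (0:ℝ) 1 ∪ B '' Icc (0:ℝ) 1, x - i ∈
      (fun s => Homeomorph.subRight i (R s)) '' Icc (0:ℝ) 1 ∪
        (fun s => Homeomorph.subRight i (B s)) '' Icc (0:ℝ) 1 := by
      rintro x (⟨s, hs, rfl⟩ | ⟨s, hs, rfl⟩)
      · exact Or.inl ⟨s, hs, rfl⟩
      · exact Or.inr ⟨s, hs, rfl⟩
    have := h.wd _ (key x hx) _ (key y hy)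
    rwa [sub_sub_sub_cancel_right] at this
  · simpa [cr_sub] using h.pq
  · simpa [cr_sub] using h.Rp
  · simpa [cr_sub] using h.Bp
  · simpa [cr_sub] using h.Rq
  · simpa [cr_sub] using h.Bq

end Cfg

/-- order-preserving coupling of two monotone functions -/
lemma coupling {ρ β : ℝ → ℝ} (hρ : Continuous ρ) (hβ : Continuous β) (mρ : Monotone ρ)
    (mβ : Monotone β) (h0 : ρ 0 = β 0) (h1 : ρ 1 = β 1) :
    ∃ f g, Cfg.Par f ∧ Cfg.Par g ∧ ∀ τ, ρ (f τ) = β (g τ) := by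
  set K : ℝ → Set ℝ := fun x => {s | 0 ≤ s ∧ s ≤ 1 ∧ 0 ≤ x - s ∧ x - s ≤ 1 ∧ ρ s ≤ β (x - s)} with hK
  have hKc : ∀ x, IsClosed (K x) := by
    intro x
    have hx : Continuous (fun s : ℝ => x - s) := by fun_prop
    have e : K x = {s | 0 ≤ s} ∩ ({s | s ≤ 1} ∩ ({s | 0 ≤ x - s} ∩ ({s | x - s ≤ 1} ∩
        {s | ρ s ≤ β (x - s)}))) := by
      ext s; exact Iff.rfl
    rw [e]
    have c1 : IsClosed {s : ℝ | 0 ≤ s} := isClosed_le continuous_const continuous_id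
    have c2 : IsClosed {s : ℝ | s ≤ 1} := isClosed_le continuous_id continuous_const
    have c3 : IsClosed {s : ℝ | 0 ≤ x - s} := isClosed_le continuous_const hx
    have c4 : IsClosed {s : ℝ | x - s ≤ 1} := isClosed_le hx continuous_const
    have c5 : IsClosed {s : ℝ | ρ s ≤ β (x - s)} := isClosed_le hρ (hβ.comp hx)
    exact c1.inter (c2.inter (c3.inter (c4.inter c5)))
  have hKb : ∀ x, BddAbove (K x) := fun x => ⟨1, fun s hs => hs.2.1⟩
  have hKn : ∀ x, 0 ≤ x → x ≤ 2 → (K x).Nonempty := by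
    intro x hx hx2
    rcases le_total x 1 with h | h
    · exact ⟨0, le_rfl, zero_le_one, by linarith, by linarith, by
        rw [h0]; exact mβ (by linarith)⟩
    · refine ⟨x - 1, by linarith, by linarith, by linarith, by linarith, ?_⟩
      rw [sub_sub_cancel, ← h1]; exact mρ (by linarith)
  set F : ℝ → ℝ := fun x => sSup (K x) with hF
  have hFm : ∀ x, 0 ≤ x → x ≤ 2 → F x ∈ K x := fun x a b => (hKc x).csSup_mem (hKn x a b) (hKb x)
  have hFle : ∀ x s, s ∈ K x → s ≤ F x := fun x s hs => le_csSup (hKb x) hs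
  have hFmono : ∀ x y, 0 ≤ x → x ≤ y → y ≤ 2 → F x ≤ F y := by
    intro x y hx hxy hy
    have a := hFm x hx (hxy.trans hy)
    have b := hFm y (hx.trans hxy) hy
    by_cases h : y - F x ≤ 1
    · exact hFle y _ ⟨a.1, a.2.1, by linarith [a.2.2.1], h,
        a.2.2.2.2.trans (mβ (by linarith))⟩
    · linarith [b.2.2.2.1]
  have hGmono : ∀ x y, 0 ≤ x → x ≤ y → y ≤ 2 → F y ≤ F x + (y - x) := by
    intro x y hx hxy hy
    have a := hFm x hx (hxy.trans hy)
    have b := hFm y (hx.trans hxy) hy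
    by_contra hcon
    push Not at hcon
    have : F y - (y - x) ≤ F x := by
      apply hFle x
      have e : x - (F y - (y - x)) = y - F y := by ring
      refine ⟨by linarith [a.1], by linarith [b.2.1], by rw [e]; exact b.2.2.1,
        by rw [e]; exact b.2.2.2.1, ?_⟩
      rw [e]
      exact (mρ (by linarith)).trans b.2.2.2.2
    linarith
  have hFeq : ∀ x, 0 ≤ x → x ≤ 2 → ρ (F x) = β (x - F x) := by
    intro x hx hx2
    have a := hFm x hx hx2
    have hab : F x ≤ min 1 x := le_min a.2.1 (by linarith [a.2.2.1])
    have hc : ContinuousOn (fun s => ρ s - β (x - s)) (Icc (F x) (min 1 x)) :=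
      (hρ.sub (hβ.comp (by fun_prop))).continuousOn
    have htop : 0 ≤ ρ (min 1 x) - β (x - min 1 x) := by
      rcases le_total x 1 with h | h
      · rw [min_eq_right h, sub_self, ← h0]; linarith [mρ hx]
      · rw [min_eq_left h, h1]; linarith [mβ (by linarith : x - 1 ≤ 1)]
    obtain ⟨s, hs, es⟩ := intermediate_value_Icc hab hc
      (show (0:ℝ) ∈ Icc _ _ from ⟨by linarith [a.2.2.2.2], htop⟩)
    simp only at es
    have : s ≤ F x := hFle x s ⟨by linarith [a.1, hs.1], hs.2.trans (min_le_left _ _),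
      by linarith [hs.2.trans (min_le_right _ _)], by linarith [a.2.2.2.1, hs.1], by linarith⟩
    have : s = F x := le_antisymm this hs.1
    rw [this] at es; linarith
  set cl : ℝ → ℝ := fun τ => 2 * max 0 (min 1 τ) with hcl
  have clc : Continuous cl := by fun_prop
  have cl0 : ∀ τ, 0 ≤ cl τ := fun τ => by simp only [hcl]; have := le_max_left 0 (min 1 τ); linarith
  have cl2 : ∀ τ, cl τ ≤ 2 := fun τ => by
    simp only [hcl]
    have : max 0 (min 1 τ) ≤ 1 := max_le zero_le_one (min_le_left _ _)
    linarith
  have clm : Monotone cl := fun a b h => by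
    simp only [hcl]
    have : max 0 (min 1 a) ≤ max 0 (min 1 b) := max_le_max le_rfl (min_le_min le_rfl h)
    linarith
  have FL : ContinuousOn F (Icc 0 2) := by
    have : LipschitzOnWith 1 F (Icc 0 2) := by
      apply LipschitzOnWith.of_le_add
      intro x hx y hy
      rw [Real.dist_eq]
      rcases le_total x y with h | h
      · linarith [hFmono x y hx.1 h hy.2, abs_nonneg (x - y)]
      · linarith [hGmono y x hy.1 h hx.2, le_abs_self (x - y)]
    exact this.continuousOn
  have fc : Continuous (fun τ => F (cl τ)) := FL.comp_continuous clc (fun τ => ⟨cl0 τ, cl2 τ⟩)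
  have c0 : cl 0 = 0 := by simp [hcl]
  have c1 : cl 1 = 2 := by simp [hcl]
  have F0 : F 0 = 0 := by
    have a := hFm 0 le_rfl (by norm_num)
    linarith [a.1, a.2.2.1]
  have F2 : F 2 = 1 := by
    have a := hFm 2 (by norm_num) le_rfl
    linarith [a.2.1, a.2.2.2.1]
  refine ⟨fun τ => F (cl τ), fun τ => cl τ - F (cl τ), ⟨fc, ?_, ?_, ?_, ?_⟩,
    ⟨clc.sub fc, ?_, ?_, ?_, ?_⟩, fun τ => hFeq _ (cl0 τ) (cl2 τ)⟩
  · exact fun a b h => hFmono _ _ (cl0 a) (clm h) (cl2 b)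
  · simp only [c0, F0]
  · simp only [c1, F2]
  · intro t; have a := hFm _ (cl0 t) (cl2 t); exact ⟨a.1, a.2.1⟩
  · intro a b h
    have := hGmono _ _ (cl0 a) (clm h) (cl2 b)
    simp only; linarith
  · simp only [c0, F0]; norm_num
  · simp only [c1, F2]; norm_num
  · intro t; have a := hFm _ (cl0 t) (cl2 t); exact ⟨a.2.2.1, a.2.2.2.1⟩

lemma Good.chord {C : ℝ} {R B : ℝ → E2} {u w : E2} (h : Good C R B u w) {x y : E2}
    (hx : x ∈ R '' Icc (0:ℝ) 1 ∪ B '' Icc (0:ℝ) 1) (hy : y ∈ R '' Icc (0:ℝ) 1 ∪ B '' Icc (0:ℝ) 1)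
    (e : cr u x = cr u y) : ‖x - y‖ ≤ C := by
  have hu : u ≠ 0 := by rintro rfl; have := h.nu; simp at this
  obtain ⟨k, hk⟩ := cr_eq_zero hu (x := x - y) (by rw [cr_sub]; linarith)
  have a := h.wd x hx y hy
  have b := h.wd y hy x hx
  rw [← neg_sub, cr_neg] at b
  rw [hk, cr_smul, h.wu] at a b
  rw [hk, norm_smul, h.nu, Real.norm_eq_abs, mul_one]
  exact abs_le.2 ⟨by linarith, by linarith⟩

namespace Cfg
variable {P : Set E2} {R B : ℝ → E2}

lemma _root_.Good.swap {C : ℝ} {u w : E2} (h : Good C R B u w) (c : Cfg P R B) : Good C B R u w where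
  nu := h.nu
  wu := h.wu
  wd := by rw [union_comm]; exact h.wd
  pq := by rw [← c.h0, ← c.h1]; exact h.pq
  Rp := h.Bp
  Bp := h.Rp
  Rq := h.Bq
  Bq := h.Rq

/-- the desired conclusion -/
def Res (C : ℝ) (R B : ℝ → E2) : Prop :=
  ∃ f g : ℝ → ℝ, Par f ∧ Par g ∧ (∀ t ∈ Icc (0:ℝ) 1, ‖R (f t) - B (g t)‖ ≤ C) ∧
      ∃ u : E2, u ≠ 0 ∧ ∃ t₀ t₁ : ℝ, 0 ≤ t₀ ∧ t₀ ≤ t₁ ∧ t₁ ≤ 1 ∧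
        ((∀ t ∈ Icc (0:ℝ) t₀, f t = 0) ∨ (∀ t ∈ Icc (0:ℝ) t₀, g t = 0)) ∧
        ((∀ t ∈ Icc t₁ (1:ℝ), f t = 1) ∨ (∀ t ∈ Icc t₁ (1:ℝ), g t = 1)) ∧
        ∀ t ∈ Icc t₀ t₁, ∃ c : ℝ, R (f t) - B (g t) = c • u

lemma Res.swap {C : ℝ} (h : Res C R B) : Res C B R := by
  obtain ⟨f, g, hf, hg, hC, u, hu, t₀, t₁, h1, h2, h3, h4, h5, h6⟩ := h
  refine ⟨g, f, hg, hf, fun t ht => by rw [norm_sub_rev]; exact hC t ht, u, hu, t₀, t₁, h1, h2, h3,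
    h4.symm, h5.symm, fun t ht => ?_⟩
  obtain ⟨k, hk⟩ := h6 t ht
  exact ⟨-k, by rw [neg_smul, ← hk, neg_sub]⟩

/-- first fan / last fan meeting with one curve moving at a time -/
lemma degen (c : Cfg P R B) {C : ℝ} {u w : E2} (h : Good C R B u w) (e : cr u (R 0) = cr u (R 1))
    (hR : ∀ s ∈ Icc (0:ℝ) 1, cr u (R s) ≤ cr u (R 0))
    (hB : ∀ s ∈ Icc (0:ℝ) 1, cr u (R 0) ≤ cr u (B s)) : Res C R B := by
  have hu : u ≠ 0 := by rintro rfl; have := h.nu; simp at this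
  have i0 : (0:ℝ) ∈ Icc (0:ℝ) 1 := by simp
  have i1 : (1:ℝ) ∈ Icc (0:ℝ) 1 := by simp
  have hf : Par (fun t => max 0 (min (2 * t) 1)) := by
    refine ⟨by fun_prop, fun a b hab => ?_, by simp, by norm_num, fun t => ⟨le_max_left _ _, ?_⟩⟩
    · exact max_le_max le_rfl (min_le_min (by linarith) le_rfl)
    · exact max_le zero_le_one (min_le_right _ _)
  have hg : Par (fun t => max 0 (min (2 * t - 1) 1)) := by
    refine ⟨by fun_prop, fun a b hab => ?_, by norm_num, by norm_num, fun t => ⟨le_max_left _ _, ?_⟩⟩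
    · exact max_le_max le_rfl (min_le_min (by linarith) le_rfl)
    · exact max_le zero_le_one (min_le_right _ _)
  have g0 : ∀ t ≤ (1/2 : ℝ), max 0 (min (2 * t - 1) 1) = 0 := fun t ht =>
    max_eq_left ((min_le_left _ _).trans (by linarith))
  have f1 : ∀ t, (1/2 : ℝ) ≤ t → max 0 (min (2 * t) 1) = 1 := fun t ht => by
    rw [min_eq_right (by linarith)]; norm_num
  refine ⟨_, _, hf, hg, ?_, u, hu, 1/2, 1/2, by norm_num, le_rfl, by norm_num,
    Or.inr fun t ht => g0 t ht.2, Or.inl fun t ht => f1 t ht.1, ?_⟩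
  · intro t ht
    have a1 := hf.I t
    have a2 := hg.I t
    rcases le_total t (1/2) with hle | hle
    · rw [g0 t hle, ← c.h0]
      rcases (hR _ a1).eq_or_lt with h' | h'
      · exact h.chord (Or.inl ⟨_, a1, rfl⟩) (Or.inl ⟨0, i0, rfl⟩) h'
      · exact h.Rp _ a1 h'
    · rw [f1 t hle, norm_sub_rev, c.h1]
      rcases (hB _ a2).eq_or_lt with h' | h'
      · exact h.chord (Or.inr ⟨_, a2, rfl⟩) (Or.inr ⟨1, i1, rfl⟩) (by rw [← c.h1]; linarith)
      · exact h.Bq _ a2 (by rw [← c.h1]; linarith)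
  · intro t ht
    have : t = 1/2 := le_antisymm ht.2 ht.1
    rw [f1 t ht.1, g0 t ht.2, ← c.h0]
    exact cr_eq_zero hu (by rw [cr_sub]; linarith)

/-- `R` cannot be strictly on both sides of the line `pq` -/
lemma one_side (c : Cfg P R B) {u : E2} (hu : u ≠ 0) (e : cr u (R 0) = cr u (R 1))
    {s1 s2 : ℝ} (i1 : s1 ∈ Icc (0:ℝ) 1) (i2 : s2 ∈ Icc (0:ℝ) 1) (h1 : cr u (R 0) < cr u (R s1))
    (h2 : cr u (R s2) < cr u (R 0)) : False := by
  have j0 : (0:ℝ) ∈ Icc (0:ℝ) 1 := by simp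
  have j1 : (1:ℝ) ∈ Icc (0:ℝ) 1 := by simp
  have hex : ∃ s, 0 < s ∧ s < 1 ∧ cr u (R s) = cr u (R 0) := by
    rcases le_total s1 s2 with h | h
    · obtain ⟨s, hs, es⟩ := ivt_down c.Rc u i1.1 h i2.2 h1.le h2.le
      have n1 : s ≠ s1 := by rintro rfl; linarith
      have n2 : s ≠ s2 := by rintro rfl; linarith
      exact ⟨s, lt_of_le_of_lt i1.1 (lt_of_le_of_ne hs.1 n1.symm),
        lt_of_lt_of_le (lt_of_le_of_ne hs.2 n2) i2.2, es⟩
    · obtain ⟨s, hs, es⟩ := ivt_up c.Rc u i2.1 h i1.2 h2.le h1.le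
      have n1 : s ≠ s1 := by rintro rfl; linarith
      have n2 : s ≠ s2 := by rintro rfl; linarith
      exact ⟨s, lt_of_le_of_lt i2.1 (lt_of_le_of_ne hs.1 n2.symm),
        lt_of_lt_of_le (lt_of_le_of_ne hs.2 n1) i1.2, es⟩
  obtain ⟨s, s0, s1', es⟩ := hex
  have is : s ∈ Icc (0:ℝ) 1 := ⟨s0.le, s1'.le⟩
  obtain ⟨i, hi, ei⟩ := level_interior c.cvx c.ne (c.RP i2) (c.RP i1) h2 h1
  exact three_gen c.cvx c.cpt.isClosed hi hu (c.Rf j0) (c.Rf is) (c.Rf j1) ei.symm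
    (by rw [es, ei]) (by rw [← e, ei]) (fun h => by have := c.Ri j0 is h; linarith)
    (fun h => by have := c.Ri is j1 h; linarith) c.pq

lemma not_both (c : Cfg P R B) {u : E2} (hu : u ≠ 0) (e : cr u (R 0) = cr u (R 1))
    {s1 s2 : ℝ} (i1 : s1 ∈ Icc (0:ℝ) 1) (i2 : s2 ∈ Icc (0:ℝ) 1) (h1 : cr u (R 0) < cr u (R s1))
    (h2 : cr u (R 0) < cr u (B s2)) : False := by
  have j0 : (0:ℝ) ∈ Icc (0:ℝ) 1 := by simp
  obtain ⟨d, hd, hd'⟩ := exists_between (lt_min h1 h2)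
  have hd1 := lt_of_lt_of_le hd' (min_le_left _ _)
  have hd2 := lt_of_lt_of_le hd' (min_le_right _ _)
  obtain ⟨a, ha, ea⟩ := ivt_up c.Rc u le_rfl i1.1 i1.2 hd.le hd1.le
  obtain ⟨b, hb, eb⟩ := ivt_down c.Rc u i1.1 i1.2 le_rfl hd1.le (by linarith)
  obtain ⟨k, hk, ek⟩ := ivt_up c.Bc u le_rfl i2.1 i2.2 (by rw [← c.h0]; exact hd.le) hd2.le
  obtain ⟨i, hi, ei⟩ := level_interior c.cvx c.ne (c.RP j0) (c.RP i1) hd hd1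
  have ia : a ∈ Icc (0:ℝ) 1 := ⟨ha.1, ha.2.trans i1.2⟩
  have ib : b ∈ Icc (0:ℝ) 1 := ⟨i1.1.trans hb.1, hb.2⟩
  have ik : k ∈ Icc (0:ℝ) 1 := ⟨hk.1, hk.2.trans i2.2⟩
  have hRk : ∀ x ∈ Icc (0:ℝ) 1, cr u (R x) = d → R x ≠ B k := by
    intro x hx ex h
    rcases c.RB hx ik h with ⟨h, _⟩ | ⟨h, _⟩ <;> rw [h] at ex <;> linarith
  refine three_gen c.cvx c.cpt.isClosed hi hu (c.Rf ia) (c.Rf ib) (c.Bf ik) (by rw [ea, ei])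
    (by rw [eb, ei]) (by rw [ek, ei]) (fun h => ?_) (hRk b ib eb) (hRk a ia ea)
  have hab := c.Ri ia ib h
  have : a = s1 := le_antisymm ha.2 (by rw [hab]; exact hb.1)
  rw [this] at ea; linarith

lemma res_eq (c : Cfg P R B) {C : ℝ} {u w : E2} (h : Good C R B u w)
    (e : cr u (R 0) = cr u (R 1)) : Res C R B := by
  have hu : u ≠ 0 := by rintro rfl; have := h.nu; simp at this
  have e' : cr u (B 0) = cr u (B 1) := by rw [← c.h0, ← c.h1]; exact e
  have en : cr (-u) (R 0) = cr (-u) (R 1) := by rw [neg_cr, neg_cr, e]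
  have hun : -u ≠ 0 := neg_ne_zero.2 hu
  have caseA : (∀ s ∈ Icc (0:ℝ) 1, cr u (R s) ≤ cr u (R 0)) →
    (∀ s ∈ Icc (0:ℝ) 1, cr u (R 0) ≤ cr u (B s)) → Res C R B := c.degen h e
  have caseB : (∀ s ∈ Icc (0:ℝ) 1, cr u (B s) ≤ cr u (R 0)) →
    (∀ s ∈ Icc (0:ℝ) 1, cr u (R 0) ≤ cr u (R s)) → Res C R B := fun a b =>
      (c.swap.degen (h.swap c) e' (by rw [← c.h0]; exact a) (by rw [← c.h0]; exact b)).swap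
  by_cases h1 : ∃ s ∈ Icc (0:ℝ) 1, cr u (R 0) < cr u (R s)
  · obtain ⟨s, hs, hlt⟩ := h1
    apply caseB
    · intro t ht; by_contra hc
      exact c.not_both hu e hs ht hlt (not_le.1 hc)
    · intro t ht; by_contra hc
      exact c.one_side hu e hs ht hlt (not_le.1 hc)
  push Not at h1
  by_cases h2 : ∃ s ∈ Icc (0:ℝ) 1, cr u (R s) < cr u (R 0)
  · obtain ⟨s, hs, hlt⟩ := h2
    apply caseA h1
    intro t ht; by_contra hc
    exact c.not_both hun en hs ht (by rw [neg_cr, neg_cr]; linarith)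
      (by rw [neg_cr, neg_cr]; linarith)
  push Not at h2
  by_cases h3 : ∃ s ∈ Icc (0:ℝ) 1, cr u (B s) < cr u (R 0)
  · obtain ⟨s, hs, hlt⟩ := h3
    refine caseB (fun t ht => ?_) h2
    by_contra hc
    exact c.swap.one_side hu e' ht hs (by rw [← c.h0]; linarith) (by rw [← c.h0]; linarith)
  push Not at h3
  exact caseA h1 h3

/-- clamped level -/
def lev (a b : ℝ) (u x : E2) : ℝ := max a (min b (cr u x))

lemma lev_mono (c : Cfg P R B) {u : E2} (hu : u ≠ 0) 
    {s1 s2 : ℝ} (i1 : s1 ∈ Icc (0:ℝ) 1) (i2 : s2 ∈ Icc (0:ℝ) 1) (h : s1 ≤ s2) :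
    lev (cr u (R 0)) (cr u (R 1)) u (R s1) ≤ lev (cr u (R 0)) (cr u (R 1)) u (R s2) := by
  by_contra hcon
  push Not at hcon
  obtain ⟨d, d1, d2⟩ := exists_between hcon
  unfold lev at d1 d2
  obtain ⟨hd0, hd3⟩ := max_lt_iff.1 d1
  have hd4 : d < min (cr u (R 1)) (cr u (R s1)) := by
    rcases lt_max_iff.1 d2 with h | h
    · linarith
    · exact h
  obtain ⟨hd5, hd6⟩ := lt_min_iff.1 hd4
  have hd7 : cr u (R s2) < d := by
    rcases min_lt_iff.1 hd3 with h | h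
    · linarith
    · exact h
  obtain ⟨a, ha, ea⟩ := ivt_up c.Rc u le_rfl i1.1 i1.2 hd0.le hd6.le
  obtain ⟨b, hb, eb⟩ := ivt_down c.Rc u i1.1 h i2.2 hd6.le hd7.le
  obtain ⟨k, hk, ek⟩ := ivt_up c.Rc u i2.1 i2.2 le_rfl hd7.le hd5.le
  obtain ⟨i, hi, ei⟩ := level_interior c.cvx c.ne (c.RP i2) (c.RP i1) hd7 hd6
  have n1 : a ≠ s1 := by rintro rfl; linarith
  have n2 : b ≠ s2 := by rintro rfl; linarith
  have l1 : a < s1 := lt_of_le_of_ne ha.2 n1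
  have l2 : b < s2 := lt_of_le_of_ne hb.2 n2
  have ia : a ∈ Icc (0:ℝ) 1 := ⟨ha.1, ha.2.trans i1.2⟩
  have ib : b ∈ Icc (0:ℝ) 1 := ⟨i1.1.trans hb.1, hb.2.trans i2.2⟩
  have ik : k ∈ Icc (0:ℝ) 1 := ⟨i2.1.trans hk.1, hk.2⟩
  exact three_gen c.cvx c.cpt.isClosed hi hu (c.Rf ia) (c.Rf ib) (c.Rf ik) (by rw [ea, ei])
    (by rw [eb, ei]) (by rw [ek, ei])
    (fun h => by have := c.Ri ia ib h; linarith [hb.1])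
    (fun h => by have := c.Ri ib ik h; linarith [hk.1])
    (fun h => by have := c.Ri ia ik h; linarith [hk.1, hb.1])

lemma dip (c : Cfg P R B) {u : E2} (hu : u ≠ 0) (hlt : cr u (R 0) < cr u (R 1)) {s t : ℝ}
    (is : s ∈ Icc (0:ℝ) 1) (it : t ∈ Icc (0:ℝ) 1) (hs : cr u (R s) < cr u (R 0))
    (ht : cr u (B t) ≤ cr u (R 0)) : t = 0 := by
  by_contra hne
  have t0 : 0 < t := lt_of_le_of_ne it.1 (Ne.symm hne)
  have j0 : (0:ℝ) ∈ Icc (0:ℝ) 1 := by simp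
  have j1 : (1:ℝ) ∈ Icc (0:ℝ) 1 := by simp
  obtain ⟨a, ha, ea⟩ := ivt_up c.Rc u is.1 is.2 le_rfl hs.le hlt.le
  obtain ⟨b, hb, eb⟩ := ivt_up c.Bc u it.1 it.2 le_rfl ht (by rw [← c.h1]; exact hlt.le)
  have ia : a ∈ Icc (0:ℝ) 1 := ⟨is.1.trans ha.1, ha.2⟩
  have ib : b ∈ Icc (0:ℝ) 1 := ⟨it.1.trans hb.1, hb.2⟩
  have n1 : a ≠ s := by rintro rfl; linarith
  have l1 : s < a := lt_of_le_of_ne ha.1 n1.symm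
  obtain ⟨i, hi, ei⟩ := level_interior c.cvx c.ne (c.RP is) (c.RP j1) hs hlt
  refine three_gen c.cvx c.cpt.isClosed hi hu (c.Rf j0) (c.Rf ia) (c.Bf ib) ei.symm
    (by rw [ea, ei]) (by rw [eb, ei]) (fun h => ?_) (fun h => ?_) (fun h => ?_)
  · have := c.Ri j0 ia h; linarith [is.1]
  · rcases c.RB ia ib h with ⟨h, _⟩ | ⟨h, _⟩
    · linarith [is.1]
    · rw [h] at ea; linarith
  · rcases c.RB j0 ib h with ⟨_, h⟩ | ⟨h, _⟩
    · linarith [hb.1]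
    · linarith

lemma start_aux (c : Cfg P R B) {u : E2} (hu : u ≠ 0) (hlt : cr u (R 0) < cr u (R 1)) {f g : ℝ → ℝ}
    (hf : Par f) (hg : Par g)
    (hfg : ∀ τ, lev (cr u (R 0)) (cr u (R 1)) u (R (f τ)) = lev (cr u (R 0)) (cr u (R 1)) u (B (g τ)))
    (hdip : ∃ s ∈ Icc (0:ℝ) 1, cr u (R s) < cr u (R 0)) :
    ∃ t₀ ∈ Icc (0:ℝ) 1, (∀ t ∈ Icc (0:ℝ) t₀, g t = 0) ∧
      ∀ t ∈ Icc t₀ (1:ℝ), cr u (R 0) ≤ cr u (R (f t)) ∧ cr u (R 0) ≤ cr u (B (g t)) := by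
  obtain ⟨s, is, hs⟩ := hdip
  have hRc : Continuous (fun τ => cr u (R (f τ))) :=
    (cr_cont u).comp (c.Rc.comp_continuous hf.c hf.I)
  set D := {τ | τ ∈ Icc (0:ℝ) 1 ∧ cr u (R (f τ)) < cr u (R 0)} with hD
  have hDb : BddAbove D := ⟨1, fun τ h => h.1.2⟩
  have hDn : D.Nonempty := by
    obtain ⟨τ, hτ, e⟩ := hf.surj is
    exact ⟨τ, hτ, by rw [e]; exact hs⟩
  have hDg : D ⊆ {τ | g τ = 0} := by
    rintro τ ⟨hτ, h⟩
    refine c.dip hu hlt (hf.I τ) (hg.I τ) h ?_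
    have e := hfg τ
    by_contra hc
    push Not at hc
    unfold lev at e
    rw [max_eq_left ((min_le_right _ _).trans h.le)] at e
    have : cr u (R 0) < max (cr u (R 0)) (min (cr u (R 1)) (cr u (B (g τ)))) :=
      lt_max_of_lt_right (lt_min hlt hc)
    linarith
  have hg0 : g (sSup D) = 0 :=
    closure_minimal hDg (isClosed_eq hg.c continuous_const) (csSup_mem_closure hDn hDb)
  have h1 : sSup D ≤ 1 := csSup_le hDn fun τ h => h.1.2
  have h0 : 0 ≤ sSup D := by
    obtain ⟨τ, hτ⟩ := hDn
    exact hτ.1.1.trans (le_csSup hDb hτ)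
  refine ⟨sSup D, ⟨h0, h1⟩, fun t ht => le_antisymm (hg0 ▸ hg.m ht.2) (hg.I t).1, fun t ht => ⟨?_, ?_⟩⟩
  · rcases h1.eq_or_lt with h | h
    · have : t = 1 := le_antisymm ht.2 (by rw [← h]; exact ht.1)
      rw [this, hf.o]; exact hlt.le
    · have hsub : Ioc (sSup D) 1 ⊆ {τ | cr u (R 0) ≤ cr u (R (f τ))} := by
        intro τ hτ
        by_contra hc
        have : τ ∈ D := ⟨⟨h0.trans hτ.1.le, hτ.2⟩, not_le.1 hc⟩
        exact absurd (le_csSup hDb this) (not_le.2 hτ.1)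
      have := closure_minimal hsub (isClosed_le continuous_const hRc)
      rw [closure_Ioc h.ne] at this
      exact this ht
  · by_contra hc
    push Not at hc
    have := c.dip hu hlt is (hg.I t) hs hc.le
    rw [this, ← c.h0] at hc
    exact lt_irrefl _ hc

lemma start (c : Cfg P R B) {u : E2} (hu : u ≠ 0) (hlt : cr u (R 0) < cr u (R 1)) {f g : ℝ → ℝ}
    (hf : Par f) (hg : Par g)
    (hfg : ∀ τ, lev (cr u (R 0)) (cr u (R 1)) u (R (f τ)) = lev (cr u (R 0)) (cr u (R 1)) u (B (g τ))) :
    ∃ t₀ ∈ Icc (0:ℝ) 1, ((∀ t ∈ Icc (0:ℝ) t₀, f t = 0) ∨ (∀ t ∈ Icc (0:ℝ) t₀, g t = 0)) ∧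
      ∀ t ∈ Icc t₀ (1:ℝ), cr u (R 0) ≤ cr u (R (f t)) ∧ cr u (R 0) ≤ cr u (B (g t)) := by
  by_cases h1 : ∃ s ∈ Icc (0:ℝ) 1, cr u (R s) < cr u (R 0)
  · obtain ⟨t, ht, a, b⟩ := c.start_aux hu hlt hf hg hfg h1
    exact ⟨t, ht, Or.inr a, b⟩
  by_cases h2 : ∃ s ∈ Icc (0:ℝ) 1, cr u (B s) < cr u (R 0)
  · obtain ⟨t, ht, a, b⟩ := c.swap.start_aux hu (by rw [← c.h0, ← c.h1]; exact hlt) hg hf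
      (by rw [← c.h0, ← c.h1]; exact fun τ => (hfg τ).symm) (by rw [← c.h0]; exact h2)
    rw [← c.h0] at b
    exact ⟨t, ht, Or.inl a, fun t ht => (b t ht).symm⟩
  push Not at h1 h2
  refine ⟨0, by simp, Or.inl fun t ht => ?_, fun t ht => ⟨h1 _ (hf.I t), h2 _ (hg.I t)⟩⟩
  have : t = 0 := le_antisymm ht.2 ht.1
  rw [this, hf.z]

lemma _root_.lev_neg (a b : ℝ) (hab : a ≤ b) (u x : E2) : lev (-b) (-a) (-u) x = - lev a b u x := by
  unfold lev
  rw [neg_cr, min_neg_neg, max_neg_neg]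
  congr 1
  rcases le_total (cr u x) a with h | h
  · rw [max_eq_left h, min_eq_right hab, min_eq_right (h.trans hab), max_eq_left h]
  · rw [max_eq_right h]
    rw [max_eq_right (le_min hab h)]

lemma res_lt (c : Cfg P R B) {C : ℝ} {u w : E2} (h : Good C R B u w)
    (hlt : cr u (R 0) < cr u (R 1)) : Res C R B := by
  have hu : u ≠ 0 := by rintro rfl; have := h.nu; simp at this
  have j0 : (0:ℝ) ∈ Icc (0:ℝ) 1 := by simp
  have j1 : (1:ℝ) ∈ Icc (0:ℝ) 1 := by simp
  set a := cr u (R 0) with ha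
  set b := cr u (R 1) with hb
  have hlevc : ∀ γ : ℝ → E2, ContinuousOn γ (Icc 0 1) →
      Continuous (fun s => lev a b u (γ (projIcc (0:ℝ) 1 zero_le_one s))) := by
    intro γ hγ
    have : Continuous (fun s => γ (projIcc (0:ℝ) 1 zero_le_one s)) :=
      hγ.comp_continuous (continuous_subtype_val.comp continuous_projIcc) (fun s => Subtype.coe_prop _)
    unfold lev
    exact continuous_const.max (continuous_const.min ((cr_cont u).comp this))
  have hm : ∀ s t : ℝ, s ≤ t → (projIcc (0:ℝ) 1 zero_le_one s : ℝ) ≤ projIcc (0:ℝ) 1 zero_le_one t :=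
    fun s t hst => monotone_projIcc _ hst
  obtain ⟨f, g, hf, hg, hfg⟩ := coupling (hlevc R c.Rc) (hlevc B c.Bc)
    (fun s t hst => c.lev_mono hu (Subtype.coe_prop _) (Subtype.coe_prop _) (hm s t hst))
    (fun s t hst => by
      have := c.swap.lev_mono hu (Subtype.coe_prop (projIcc (0:ℝ) 1 zero_le_one s))
        (Subtype.coe_prop (projIcc (0:ℝ) 1 zero_le_one t)) (hm s t hst)
      rw [← c.h0, ← c.h1] at this
      exact this)
    (by simp [c.h0]) (by simp [c.h1])
  have hfg : ∀ τ, lev a b u (R (f τ)) = lev a b u (B (g τ)) := by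
    intro τ
    have := hfg τ
    rwa [projIcc_of_mem _ (hf.I τ), projIcc_of_mem _ (hg.I τ)] at this
  obtain ⟨t₀, ht₀, hs1, hs2⟩ := c.start hu hlt hf hg hfg
  have hrev := c.rev.start (u := -u) (f := fun t => 1 - f (1 - t)) (g := fun t => 1 - g (1 - t))
    (neg_ne_zero.2 hu) (by simp only [neg_cr, sub_zero, sub_self]; linarith) hf.rev hg.rev (by
      intro τ
      simp only [sub_sub_cancel, sub_zero, sub_self]
      rw [neg_cr, neg_cr, lev_neg _ _ hlt.le, lev_neg _ _ hlt.le, hfg])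
  obtain ⟨t₁', ht₁, he1, he2⟩ := hrev
  have he1' : (∀ t ∈ Icc (1 - t₁') (1:ℝ), f t = 1) ∨ (∀ t ∈ Icc (1 - t₁') (1:ℝ), g t = 1) := by
    refine he1.imp (fun h t ht => ?_) (fun h t ht => ?_) <;>
    · have := h (1 - t) ⟨by linarith [ht.2], by linarith [ht.1]⟩
      simp only [sub_sub_cancel] at this
      linarith
  have he2' : ∀ t ∈ Icc (0:ℝ) (1 - t₁'), cr u (R (f t)) ≤ b ∧ cr u (B (g t)) ≤ b := by
    intro t ht
    have := he2 (1 - t) ⟨by linarith [ht.2], by linarith [ht.1]⟩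
    simp only [sub_sub_cancel, neg_cr, sub_zero] at this
    exact ⟨by linarith [this.1], by linarith [this.2]⟩
  have la : lev a b u (R 0) = a := by
    unfold lev; rw [← ha]; exact max_eq_left (min_le_right _ _)
  have lb : lev a b u (R 1) = b := by
    unfold lev; rw [← hb, min_self]; exact max_eq_right hlt.le
  have lA : ∀ x, cr u x < a → lev a b u x = a := fun x hx => by
    unfold lev; exact max_eq_left ((min_le_right _ _).trans hx.le)
  have lB : ∀ x, b < cr u x → lev a b u x = b := fun x hx => by
    unfold lev; rw [min_eq_left hx.le]; exact max_eq_right hlt.le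
  have lM : ∀ x, a ≤ cr u x → cr u x ≤ b → lev a b u x = cr u x := fun x h1 h2 => by
    unfold lev; rw [min_eq_right h2]; exact max_eq_right h1
  have la' : ∀ x, lev a b u x = a → cr u x ≤ a := fun x hx => by
    by_contra hc
    push Not at hc
    have : a < lev a b u x := lt_max_of_lt_right (lt_min hlt hc)
    linarith
  have lb' : ∀ x, lev a b u x = b → b ≤ cr u x := fun x hx => by
    by_contra hc
    push Not at hc
    have : lev a b u x < b := max_lt hlt (min_lt_of_right_lt hc)
    linarith
  have t01 : t₀ ≤ 1 - t₁' := by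
    by_contra hc
    push Not at hc
    have k1 : t₀ ∈ Icc (0:ℝ) t₀ := ⟨ht₀.1, le_rfl⟩
    have k2 : t₀ ∈ Icc (1 - t₁') (1:ℝ) := ⟨hc.le, ht₀.2⟩
    have e := hfg t₀
    rcases hs1 with h1 | h1 <;> rcases he1' with h2 | h2
    · linarith [h1 _ k1, h2 _ k2]
    · rw [h1 _ k1, h2 _ k2, ← c.h1, la, lb] at e; linarith
    · rw [h1 _ k1, h2 _ k2, ← c.h0, la, lb] at e; linarith
    · linarith [h1 _ k1, h2 _ k2]
  refine ⟨f, g, hf, hg, ?_, u, hu, t₀, 1 - t₁', ht₀.1, t01, by linarith [ht₁.1], hs1, he1', ?_⟩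
  · intro t ht
    have e := hfg t
    have fi := hf.I t
    have gi := hg.I t
    by_cases c1 : cr u (R (f t)) < a
    · have hz := c.dip hu hlt fi gi c1 (la' _ (by rw [← e]; exact lA _ c1))
      rw [hz, ← c.h0]
      exact h.Rp _ fi c1
    by_cases c2 : cr u (B (g t)) < a
    · have hz := c.swap.dip hu (by rw [← c.h0, ← c.h1]; exact hlt) gi fi (by rw [← c.h0]; exact c2)
        (by rw [← c.h0]; exact la' _ (by rw [e]; exact lA _ c2))
      rw [hz, norm_sub_rev, c.h0]
      exact h.Bp _ gi (by rw [← c.h0]; exact c2)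
    by_cases c3 : b < cr u (R (f t))
    · have hz := c.rev.dip (u := -u) (s := 1 - f t) (t := 1 - g t) (neg_ne_zero.2 hu)
        (by simp only [neg_cr, sub_zero, sub_self]; linarith)
        ⟨by linarith [fi.2], by linarith [fi.1]⟩ ⟨by linarith [gi.2], by linarith [gi.1]⟩
        (by simp only [neg_cr, sub_zero, sub_sub_cancel]; linarith)
        (by
          simp only [neg_cr, sub_zero, sub_sub_cancel]
          have := lb' (B (g t)) (by rw [← e]; exact lB _ c3)
          linarith)
      have hz' : g t = 1 := by linarith
      rw [hz', ← c.h1]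
      exact h.Rq _ fi c3
    by_cases c4 : b < cr u (B (g t))
    · have hb' : cr u (B 1) = b := by rw [← c.h1]
      have ha' : cr u (B 0) = a := by rw [← c.h0]
      have hz := c.rev.swap.dip (u := -u) (s := 1 - g t) (t := 1 - f t) (neg_ne_zero.2 hu)
        (by simp only [neg_cr, sub_zero, sub_self]; linarith)
        ⟨by linarith [gi.2], by linarith [gi.1]⟩ ⟨by linarith [fi.2], by linarith [fi.1]⟩
        (by simp only [neg_cr, sub_zero, sub_sub_cancel]; linarith)
        (by
          simp only [neg_cr, sub_zero, sub_sub_cancel]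
          have := lb' (R (f t)) (by rw [e]; exact lB _ c4)
          linarith)
      have hz' : f t = 1 := by linarith
      rw [hz', norm_sub_rev, c.h1]
      exact h.Bq _ gi (by rw [hb']; exact c4)
    push Not at c1 c2 c3 c4
    rw [lM _ c1 c3, lM _ c2 c4] at e
    exact h.chord (Or.inl ⟨_, fi, rfl⟩) (Or.inr ⟨_, gi, rfl⟩) e
  · intro t ht
    have e := hfg t
    have k1 := hs2 t ⟨ht.1, by linarith [ht.2, ht₁.1]⟩
    have k2 := he2' t ⟨by linarith [ht.1, ht₀.1], ht.2⟩
    rw [lM _ k1.1 k2.1, lM _ k1.2 k2.2] at e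
    exact cr_eq_zero hu (by rw [cr_sub]; linarith)

lemma res (c : Cfg P R B) {C : ℝ} {u w : E2} (h : Good C R B u w) : Res C R B := by
  rcases h.pq.eq_or_lt with e | e
  · exact c.res_eq h e
  · exact c.res_lt h e

end Cfg

/-- a reparameterization extends to a continuous one on the whole line -/
lemma IsRepar.par {f : ℝ → ℝ} (h : IsRepar f) :
    ∃ F, Cfg.Par F ∧ ∀ t ∈ Icc (0:ℝ) 1, F t = f t := by
  obtain ⟨hm, hM, hS⟩ := h
  have i0 : (0:ℝ) ∈ Icc (0:ℝ) 1 := ⟨le_rfl, zero_le_one⟩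
  have i1 : (1:ℝ) ∈ Icc (0:ℝ) 1 := ⟨zero_le_one, le_rfl⟩
  let f' : Icc (0:ℝ) 1 → Icc (0:ℝ) 1 := fun x => ⟨f x, hM x.2⟩
  have m' : Monotone f' := fun x y hxy => hm x.2 y.2 hxy
  have s' : Function.Surjective f' := by
    rintro ⟨y, hy⟩
    obtain ⟨x, hx, e⟩ := hS hy
    exact ⟨⟨x, hx⟩, Subtype.ext e⟩
  have c' : Continuous f' := m'.continuous_of_surjective s'
  have ag : ∀ t ∈ Icc (0:ℝ) 1, (f' (projIcc 0 1 zero_le_one t) : ℝ) = f t := by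
    intro t ht
    rw [projIcc_of_mem zero_le_one ht]
  refine ⟨fun t => (f' (projIcc 0 1 zero_le_one t) : ℝ), ⟨?_, ?_, ?_, ?_, ?_⟩, ag⟩
  · exact continuous_subtype_val.comp (c'.comp continuous_projIcc)
  · intro a b hab
    exact m' (monotone_projIcc zero_le_one hab)
  · change (f' (projIcc 0 1 zero_le_one 0) : ℝ) = 0
    rw [ag 0 i0]
    obtain ⟨x, hx, e⟩ := hS i0
    exact le_antisymm ((hm i0 hx hx.1).trans e.le) (hM i0).1
  · change (f' (projIcc 0 1 zero_le_one 1) : ℝ) = 1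
    rw [ag 1 i1]
    obtain ⟨x, hx, e⟩ := hS i1
    exact le_antisymm (hM i1).2 (e.ge.trans (hm hx i1 hx.2))
  · intro t
    exact (f' (projIcc 0 1 zero_le_one t)).2

lemma Cfg.Par.repar {f : ℝ → ℝ} (h : Cfg.Par f) : IsRepar f := by
  refine ⟨h.m.monotoneOn _, fun t _ => h.I t, ?_⟩
  have := intermediate_value_Icc (zero_le_one (α := ℝ)) h.c.continuousOn
  rw [h.z, h.o] at this
  exact this

lemma eCost_nonneg (R B : ℝ → E2) (f g : ℝ → ℝ) : 0 ≤ eCost R B f g := by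
  apply Real.sSup_nonneg
  rintro x ⟨t, -, rfl⟩
  exact norm_nonneg _

lemma le_eCost {R B : ℝ → E2} (hRc : ContinuousOn R (Icc 0 1)) (hBc : ContinuousOn B (Icc 0 1))
    {f g : ℝ → ℝ} (hf : IsRepar f) (hg : IsRepar g) {t : ℝ} (ht : t ∈ Icc (0:ℝ) 1) :
    ‖R (f t) - B (g t)‖ ≤ eCost R B f g := by
  apply le_csSup
  · obtain ⟨M, hM⟩ := isCompact_Icc.exists_bound_of_continuousOn hRc
    obtain ⟨N, hN⟩ := isCompact_Icc.exists_bound_of_continuousOn hBc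
    refine ⟨M + N, ?_⟩
    rintro x ⟨s, hs, rfl⟩
    exact (norm_sub_le _ _).trans (add_le_add (hM _ (hf.2.1 hs)) (hN _ (hg.2.1 hs)))
  · exact ⟨t, ht, rfl⟩

/-- If `R` and `B` bound a compact convex polygon `P`, there is
a maximally-parallel Fréchet matching: a matching `(f, g)` of cost `d_F(R, B)`, a
direction `u ≠ 0` and times `t₀ ≤ t₁` such that in the first fan `[0, t₀]` one
curve stays at the common start point, in the last fan `[t₁, 1]` one curve stays
at the common end point, and in the parallel part `[t₀, t₁]` every matched pair
of points lies on a line parallel to `u`. -/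
theorem exists_maximally_parallel_matching
    (P : Set E2) (V : Finset E2) (hP : P = convexHull ℝ (V : Set E2))
    (hPint : (interior P).Nonempty)
    (R B : ℝ → E2)
    (hRc : ContinuousOn R (Icc 0 1)) (hBc : ContinuousOn B (Icc 0 1))
    (hRpa : IsPiecewiseAffine R) (hBpa : IsPiecewiseAffine B)
    (hRinj : InjOn R (Icc 0 1)) (hBinj : InjOn B (Icc 0 1))
    (h0 : R 0 = B 0) (h1 : R 1 = B 1)
    (hbd : R '' Icc (0:ℝ) 1 ∪ B '' Icc (0:ℝ) 1 = frontier P)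
    (hint : R '' Icc (0:ℝ) 1 ∩ B '' Icc (0:ℝ) 1 = {R 0, R 1}) :
    ∃ f g : ℝ → ℝ, IsRepar f ∧ IsRepar g ∧ eCost R B f g = eFrechet R B ∧
      ∃ u : E2, u ≠ 0 ∧ ∃ t₀ t₁ : ℝ, 0 ≤ t₀ ∧ t₀ ≤ t₁ ∧ t₁ ≤ 1 ∧
        ((∀ t ∈ Icc (0:ℝ) t₀, f t = 0) ∨ (∀ t ∈ Icc (0:ℝ) t₀, g t = 0)) ∧
        ((∀ t ∈ Icc t₁ (1:ℝ), f t = 1) ∨ (∀ t ∈ Icc t₁ (1:ℝ), g t = 1)) ∧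
        ∀ t ∈ Icc t₀ t₁, ∃ c : ℝ, R (f t) - B (g t) = c • u := by
  have c : Cfg P R B :=
    { cpt := by rw [hP]; exact V.finite_toSet.isCompact_convexHull (𝕜 := ℝ)
      cvx := by rw [hP]; exact convex_convexHull ℝ _
      ne := hPint
      Rc := hRc
      Bc := hBc
      Ri := hRinj
      Bi := hBinj
      h0 := h0
      h1 := h1
      bd := hbd
      int := hint }
  have hid : IsRepar (fun t => t) := ⟨fun _ _ _ _ h => h, fun _ h => h, fun y hy => ⟨y, hy, rfl⟩⟩
  have hne : {x : ℝ | ∃ f g : ℝ → ℝ, IsRepar f ∧ IsRepar g ∧ x = eCost R B f g}.Nonempty :=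
    ⟨_, _, _, hid, hid, rfl⟩
  have hbb : BddBelow {x : ℝ | ∃ f g : ℝ → ℝ, IsRepar f ∧ IsRepar g ∧ x = eCost R B f g} := by
    refine ⟨0, ?_⟩
    rintro x ⟨f, g, -, -, rfl⟩
    exact eCost_nonneg R B f g
  have hlim : ∀ η > 0, ∃ f g, Cfg.Par f ∧ Cfg.Par g ∧
      ∀ τ ∈ Icc (0:ℝ) 1, ‖R (f τ) - B (g τ)‖ ≤ eFrechet R B + η := by
    intro η hη
    obtain ⟨x, ⟨f, g, hf, hg, rfl⟩, hx⟩ :=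
      exists_lt_of_csInf_lt hne (show sInf _ < eFrechet R B + η from lt_add_of_pos_right _ hη)
    obtain ⟨F, hF, eF⟩ := hf.par
    obtain ⟨G, hG, eG⟩ := hg.par
    refine ⟨F, G, hF, hG, fun τ hτ => ?_⟩
    rw [eF τ hτ, eG τ hτ]
    exact (le_eCost hRc hBc hf hg hτ).trans hx.le
  obtain ⟨u, w, hgood⟩ := c.limit hlim
  obtain ⟨f, g, hf, hg, hC, htail⟩ := c.res hgood
  refine ⟨f, g, hf.repar, hg.repar, le_antisymm ?_ ?_, htail⟩
  · apply csSup_le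
    · exact ⟨_, 0, ⟨le_rfl, zero_le_one⟩, rfl⟩
    · rintro x ⟨t, ht, rfl⟩
      exact hC t ht
  · exact csInf_le hbb ⟨f, g, hf.repar, hg.repar, rfl⟩
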